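/- Let u : [0,2π)² → ℝ² be measurable with ‖u‖_{L^{2,1}} := ∫_0^∞ ( vol{ x ∈ [0,2π)² : |u(x)| > λ } )^{1/2} dλ < ∞. If u has mean value zero, is weakly divergence-free, and is a weak steady solution of the 2D Navier–Stokes equations, then u = 0 almost everywhere. -/

import Mathlib

open MeasureTheory Real
open scoped ENNReal

noncomputable section

/-- Partial derivative `∂_i f` of a scalar function on `ℝ^d`. -/
def pd (d : ℕ) (i : Fin d) (f : (Fin d → ℝ) → ℝ) (x : Fin d → ℝ) : ℝ :=
  fderiv ℝ f x (Pi.single i 1)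

/-- Divergence of a vector field on `ℝ^d`. -/
def divg (d : ℕ) (u : (Fin d → ℝ) → (Fin d → ℝ)) (x : Fin d → ℝ) : ℝ :=
  ∑ i, pd d i (fun y => u y i) x

/-- Laplacian of a scalar function on `ℝ^d`. -/
def lap (d : ℕ) (f : (Fin d → ℝ) → ℝ) (x : Fin d → ℝ) : ℝ :=
  ∑ i, pd d i (pd d i f) x

/-- `(2πℤ)^d`-periodicity. -/
def PerF {α : Type*} (d : ℕ) (f : (Fin d → ℝ) → α) : Prop :=
  ∀ (x : Fin d → ℝ) (k : Fin d → ℤ), f (x + fun i => 2 * π * (k i : ℝ)) = f x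

/-- The fundamental domain `[0,2π)²` of the torus `T²`. -/
def T2 : Set (Fin 2 → ℝ) := Set.Ico 0 (fun _ => 2 * π)

/-- Euclidean norm on `ℝ²`. -/
def enorm2 (x : Fin 2 → ℝ) : ℝ := Real.sqrt (x 0 ^ 2 + x 1 ^ 2)

/-- The Lorentz `L^{2,1}` functional `∫_0^∞ (vol{x ∈ [0,2π)² : |f(x)| > λ})^{1/2} dλ`. -/
def L21 (f : (Fin 2 → ℝ) → (Fin 2 → ℝ)) : ℝ≥0∞ :=
  ∫⁻ l in Set.Ioi (0 : ℝ), volume {x ∈ T2 | l < enorm2 (f x)} ^ (1 / 2 : ℝ)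

/-!
The argument is by duality. For a frequency `k₀ ≠ 0` consider the linear problem
`Δ² Ψ + J div ((u · ∇) ∇ J Ψ) = e^{i k₀ · x}`, where `J` is a heat-flow mollifier truncated to
frequencies at most `N`. Advection by the divergence-free field `u` is skew-symmetric, so the
Galerkin system in the frequencies at most `N` is injective, hence solvable, and the Hessian of `Ψ`
is bounded in `L²` independently of `N`.

In the plane the third derivatives of the Green function of `Δ²` are `O(1/|x|)`, uniformly in `N`:
they lie in weak `L²`, the dual of `L^{2,1}`. Split `u` into a bounded part and a part of small
`L^{2,1}` norm. In the representation of the mollified Hessian `H` of `J Ψ` by these kernels, the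
small part is absorbed into `sup |H|` and the bounded part is controlled by the `L²` bound, so
`sup |H|` is bounded independently of `N`.

Testing the steady equation with the rotated gradient of the dual solution cancels everything except
`ω̂(-k₀) / |k₀|²`, up to the error of mollifying the rotated velocity in `∑ u_i H_{ij} u^⊥_j`. This
error tends to `0` in `L²` while `u H` stays bounded in `L²`. Hence every vorticity coefficient
vanishes, and with the mean and the divergence so does `u`.
-/

open Filter Topology Asymptotics Finset

/-! ### Exponential sums with sampled coefficients -/

/-- The profile `(1 + |y|)⁻²`; `g =O[⊤] quadDecay` expresses quadratic decay of `g` on `ℝ`. -/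
def quadDecay (y : ℝ) : ℝ := ((1 + |y|) ^ 2)⁻¹

lemma quadDecay_pos (y : ℝ) : 0 < quadDecay y := by unfold quadDecay; positivity

lemma exists_abs_le_quadDecay {g : ℝ → ℝ} (hg : g =O[⊤] quadDecay) :
    ∃ C, 0 ≤ C ∧ ∀ y, |g y| ≤ C * quadDecay y := by
  obtain ⟨C, hC, h⟩ := hg.exists_nonneg
  refine ⟨C, hC, fun y => ?_⟩
  simpa [abs_of_pos (quadDecay_pos y)] using isBigOWith_top.1 h y

lemma quadDecay_le_nine_mul {y z : ℝ} (h : |z - y| ≤ 2) : quadDecay z ≤ 9 * quadDecay y := by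
  have hyz : 1 + |y| ≤ 3 * (1 + |z|) := by
    linarith [abs_sub_abs_le_abs_sub y z, abs_sub_comm y z, abs_nonneg z]
  unfold quadDecay
  rw [← div_eq_mul_inv, le_div_iff₀ (by positivity), inv_mul_le_iff₀ (by positivity)]
  nlinarith [abs_nonneg y]

lemma mul_sum_range_quadDecay_le {h : ℝ} (hh : 0 < h) (N : ℕ) :
    h * ∑ k ∈ range N, quadDecay (h * (k + 1)) ≤ 1 - 1 / (1 + h * N) := by
  induction N with
  | zero => simp
  | succ n ih =>
    have hn : (0 : ℝ) < 1 + h * n := by positivity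
    have hn' : (0 : ℝ) < 1 + h * (n + 1) := by positivity
    have telescope : h * quadDecay (h * (n + 1)) ≤ 1 / (1 + h * n) - 1 / (1 + h * (n + 1)) := by
      rw [quadDecay, abs_of_pos (by positivity), ← div_eq_mul_inv,
        div_sub_div _ _ hn.ne' hn'.ne', div_le_div_iff₀ (by positivity) (by positivity)]
      nlinarith [mul_pos hh hn']
    rw [sum_range_succ, mul_add]
    push_cast
    linarith

lemma sum_Icc_neg_succ {M : Type*} [AddCommMonoid M] (n : ℕ) (f : ℤ → M) :
    ∑ k ∈ Icc (-((n + 1 : ℕ) : ℤ)) (n + 1 : ℕ), f k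
      = f (-(n + 1 : ℕ)) + (f (n + 1 : ℕ) + ∑ k ∈ Icc (-(n : ℤ)) n, f k) := by
  have hI : Icc (-((n + 1 : ℕ) : ℤ)) (n + 1 : ℕ)
      = insert (-((n + 1 : ℕ) : ℤ)) (insert ((n + 1 : ℕ) : ℤ) (Icc (-(n : ℤ)) n)) := by
    ext k
    simp only [mem_Icc, mem_insert]
    omega
  rw [hI, sum_insert, sum_insert]
  · simp
  · simp only [mem_insert, mem_Icc]
    omega

lemma mul_sum_Icc_quadDecay_le {h : ℝ} (hh : 0 < h) (N : ℕ) :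
    h * ∑ k ∈ Icc (-(N : ℤ)) N, quadDecay (h * k) ≤ h + 2 := by
  have fold : ∑ k ∈ Icc (-(N : ℤ)) N, quadDecay (h * k)
      = 1 + 2 * ∑ k ∈ range N, quadDecay (h * (k + 1)) := by
    induction N with
    | zero => simp [quadDecay]
    | succ n ih =>
      rw [sum_Icc_neg_succ, ih, sum_range_succ]
      push_cast
      simp only [quadDecay, mul_neg, abs_neg]
      ring
  have hN : (0 : ℝ) ≤ 1 / (1 + h * N) := by positivity
  rw [fold]
  linarith [mul_sum_range_quadDecay_le hh N]

/-- The symmetric exponential sum `∑_{|k| ≤ N} c_k e^{ikx}`. -/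
def expSum (N : ℕ) (c : ℤ → ℂ) (x : ℝ) : ℂ :=
  ∑ k ∈ Icc (-(N : ℤ)) N, c k * Complex.exp (Complex.I * (k * x))

lemma norm_exp_I_mul (k : ℤ) (x : ℝ) : ‖Complex.exp (Complex.I * (k * x))‖ = 1 := by
  have := Complex.norm_exp_I_mul_ofReal (k * x)
  push_cast at this
  exact this

lemma norm_expSum_le (N : ℕ) (c : ℤ → ℂ) (x : ℝ) :
    ‖expSum N c x‖ ≤ ∑ k ∈ Icc (-(N : ℤ)) N, ‖c k‖ :=
  (norm_sum_le _ _).trans_eq <| by simp only [norm_mul, norm_exp_I_mul, mul_one]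

lemma summation_by_parts_twice {R : Type*} [CommRing R] (g e : ℤ → R) (N : ℕ) :
    ∑ k ∈ Icc (-(N : ℤ)) N, g k * (2 * e k - e (k + 1) - e (k - 1))
      = ∑ k ∈ Icc (-(N : ℤ)) N, (2 * g k - g (k + 1) - g (k - 1)) * e k
        + (g (N + 1) * e N + g (-N - 1) * e (-N) - g N * e (N + 1) - g (-N) * e (-N - 1)) := by
  induction N with
  | zero =>
    simp only [CharP.cast_eq_zero, neg_zero, Icc_self, sum_singleton, zero_add, zero_sub]
    ring
  | succ n ih =>
    rw [sum_Icc_neg_succ, sum_Icc_neg_succ, ih]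
    push_cast
    simp only [show (-((n : ℤ) + 1)) = -n - 1 by ring, show (-(n : ℤ) - 1 + 1) = -n by ring,
      add_sub_cancel_right]
    ring

lemma two_sub_two_cos_mul_expSum (N : ℕ) (c : ℤ → ℂ) (x : ℝ) :
    ((2 - 2 * Real.cos x : ℝ) : ℂ) * expSum N c x
      = expSum N (fun k => 2 * c k - c (k + 1) - c (k - 1)) x
        + (c (N + 1) * Complex.exp (Complex.I * ((N : ℤ) * x))
          + c (-N - 1) * Complex.exp (Complex.I * ((-N : ℤ) * x))
          - c N * Complex.exp (Complex.I * ((N + 1 : ℤ) * x))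
          - c (-N) * Complex.exp (Complex.I * ((-N - 1 : ℤ) * x))) := by
  have shift_add (k : ℤ) : Complex.exp (Complex.I * ((k + 1 : ℤ) * x))
      = Complex.exp (Complex.I * (k * x)) * Complex.exp (x * Complex.I) := by
    rw [← Complex.exp_add]; push_cast; ring_nf
  have shift_sub (k : ℤ) : Complex.exp (Complex.I * ((k - 1 : ℤ) * x))
      = Complex.exp (Complex.I * (k * x)) * Complex.exp (-x * Complex.I) := by
    rw [← Complex.exp_add]; push_cast; ring_nf
  have abel := summation_by_parts_twice c (fun k : ℤ => Complex.exp (Complex.I * (k * x))) N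
  refine Eq.trans ?_ abel
  rw [expSum, mul_sum]
  refine sum_congr rfl fun k _ => ?_
  rw [shift_add, shift_sub]
  push_cast [Complex.cos]
  ring

lemma two_sub_two_cos_mul_norm_expSum_le (N : ℕ) (c : ℤ → ℂ) (x : ℝ) :
    (2 - 2 * Real.cos x) * ‖expSum N c x‖
      ≤ ∑ k ∈ Icc (-(N : ℤ)) N, ‖c (k + 1) + c (k - 1) - 2 * c k‖
        + (‖c (N + 1)‖ + ‖c (-N - 1)‖ + ‖c N‖ + ‖c (-N)‖) := by
  have hcos : 0 ≤ 2 - 2 * Real.cos x := by linarith [Real.cos_le_one x]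
  rw [← Real.norm_of_nonneg hcos, ← Complex.norm_real, ← norm_mul, two_sub_two_cos_mul_expSum]
  refine (norm_add_le _ _).trans (add_le_add ?_ ?_)
  · refine (norm_expSum_le _ _ _).trans_eq (sum_congr rfl fun k _ => ?_)
    rw [← norm_neg]
    ring_nf
  · refine (norm_sub_le _ _).trans (add_le_add ((norm_sub_le _ _).trans
      (add_le_add ((norm_add_le _ _).trans ?_) ?_)) ?_) <;>
    simp only [norm_mul, norm_exp_I_mul, mul_one, le_refl]

lemma abs_second_difference_le {g g' g'' : ℝ → ℝ} (hg : ∀ y, HasDerivAt g (g' y) y)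
    (hg' : ∀ y, HasDerivAt g' (g'' y) y) {y h B : ℝ} (hh : 0 ≤ h)
    (hB : ∀ z, |z - y| ≤ h → |g'' z| ≤ B) :
    |g (y + h) + g (y - h) - 2 * g y| ≤ 2 * B * h ^ 2 := by
  have hB0 : 0 ≤ B := (abs_nonneg _).trans (hB y (by simpa using hh))
  have first_difference : ∀ s ∈ Set.Icc 0 h, ‖g' (y + s) - g' (y - s)‖ ≤ B * (2 * h) := by
    rintro s ⟨hs0, hsh⟩
    refine ((convex_Icc (y - s) (y + s)).norm_image_sub_le_of_norm_hasDerivWithin_le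
      (fun z _ => (hg' z).hasDerivWithinAt)
      (fun z hz => hB z (by rw [abs_le]; constructor <;> linarith [hz.1, hz.2]))
      ⟨le_rfl, by linarith⟩ ⟨by linarith, le_rfl⟩).trans ?_
    gcongr
    rw [Real.norm_eq_abs, abs_le]
    constructor <;> linarith
  have deriv_difference (s : ℝ) : HasDerivAt (fun s => g (y + s) + g (y - s) - 2 * g y)
      (g' (y + s) - g' (y - s)) s := by
    rw [sub_eq_add_neg]
    exact ((HasDerivAt.comp_const_add y s (hg (y + s))).fun_add
      (HasDerivAt.comp_const_sub y s (hg (y - s)))).sub_const (2 * g y)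
  have := (convex_Icc 0 h).norm_image_sub_le_of_norm_hasDerivWithin_le
    (fun z _ => (deriv_difference z).hasDerivWithinAt) first_difference
    ⟨le_rfl, hh⟩ ⟨hh, le_rfl⟩
  simp only [add_zero, sub_zero, Real.norm_eq_abs, abs_of_nonneg hh] at this
  rw [show g y + g y - 2 * g y = 0 by ring, sub_zero] at this
  linarith

section Sampling

variable {g g' g'' : ℝ → ℝ} {C h : ℝ} {N : ℕ}

lemma abs_second_difference_le_quadDecay (hg : ∀ y, HasDerivAt g (g' y) y)
    (hg' : ∀ y, HasDerivAt g' (g'' y) y) (hC : 0 ≤ C) (bound : ∀ y, |g'' y| ≤ C * quadDecay y)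
    (hh : 0 ≤ h) (h2 : h ≤ 2) (y : ℝ) :
    |g (y + h) + g (y - h) - 2 * g y| ≤ 18 * C * h ^ 2 * quadDecay y := by
  have := abs_second_difference_le hg hg' (y := y) (B := 9 * C * quadDecay y) hh
    fun z hz => (bound z).trans (by nlinarith [quadDecay_le_nine_mul (hz.trans h2)])
  linarith

lemma mul_norm_sampled_expSum_le (hC : 0 ≤ C) (bound : ∀ y, |g y| ≤ C * quadDecay y)
    (hh : 0 < h) (x : ℝ) :
    h * ‖expSum N (fun k => (g (h * k) : ℂ)) x‖ ≤ C * (h + 2) := calc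
  _ ≤ h * ∑ k ∈ Icc (-(N : ℤ)) N, C * quadDecay (h * k) := by
    gcongr
    refine (norm_expSum_le _ _ _).trans (sum_le_sum fun k _ => ?_)
    simpa using bound (h * k)
  _ = C * (h * ∑ k ∈ Icc (-(N : ℤ)) N, quadDecay (h * k)) := by rw [← mul_sum]; ring
  _ ≤ C * (h + 2) := by gcongr; exact mul_sum_Icc_quadDecay_le hh N

lemma abs_sample_le (hC : 0 ≤ C) (bound : ∀ y, |g y| ≤ C * quadDecay y) (hh : 0 < h)
    (hhN : 1 ≤ h ^ 2 * N) {m : ℤ} (hm : (N : ℝ) ≤ |(m : ℝ)|) :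
    |g (h * m)| ≤ C * h := by
  refine (bound _).trans (mul_le_mul_of_nonneg_left ?_ hC)
  rw [quadDecay, inv_le_iff_one_le_mul₀ (by positivity), abs_mul, abs_of_pos hh]
  nlinarith [mul_le_mul_of_nonneg_left hm hh.le, mul_nonneg hh.le (abs_nonneg (m : ℝ)),
    mul_nonneg hh.le (sq_nonneg (h * |(m : ℝ)|))]

lemma two_sub_two_cos_mul_norm_sampled_expSum_le {C₀ C₂ : ℝ} (hC₀ : 0 ≤ C₀) (hC₂ : 0 ≤ C₂)
    (bound : ∀ y, |g y| ≤ C₀ * quadDecay y)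
    (bound'' : ∀ y, |g (y + h) + g (y - h) - 2 * g y| ≤ C₂ * h ^ 2 * quadDecay y)
    (hh : 0 < h) (h2 : h ≤ 2) (hhN : 1 ≤ h ^ 2 * N) (x : ℝ) :
    h * ((2 - 2 * Real.cos x) * ‖expSum N (fun k => (g (h * k) : ℂ)) x‖)
      ≤ 4 * (C₀ + C₂) * h ^ 2 := by
  have boundary (m : ℤ) (hm : (N : ℝ) ≤ |(m : ℝ)|) : ‖(g (h * m) : ℂ)‖ ≤ C₀ * h := by
    rw [Complex.norm_real]
    exact abs_sample_le hC₀ bound hh hhN hm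
  have differences (k : ℤ) :
      ‖(g (h * (k + 1 : ℤ)) : ℂ) + (g (h * (k - 1 : ℤ)) : ℂ) - 2 * (g (h * k) : ℂ)‖
        ≤ C₂ * h ^ 2 * quadDecay (h * k) := by
    rw [show h * ((k + 1 : ℤ) : ℝ) = h * k + h by push_cast; ring,
      show h * ((k - 1 : ℤ) : ℝ) = h * k - h by push_cast; ring]
    have := bound'' (h * k)
    rw [← Real.norm_eq_abs, ← Complex.norm_real] at this
    push_cast at this
    exact this
  calc
    _ ≤ h * (∑ k ∈ Icc (-(N : ℤ)) N, C₂ * h ^ 2 * quadDecay (h * k) + 4 * (C₀ * h)) := by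
      gcongr
      refine (two_sub_two_cos_mul_norm_expSum_le _ _ _).trans
        (add_le_add (sum_le_sum fun k _ => differences k) ?_)
      have hN0 : (0 : ℝ) ≤ N := N.cast_nonneg
      linarith [boundary (N + 1) (by push_cast; rw [abs_of_nonneg] <;> linarith [hN0]),
        boundary (-N - 1) (by push_cast; rw [abs_of_nonpos] <;> linarith [hN0]),
        boundary N (by simp), boundary (-N) (by simp)]
    _ = C₂ * h ^ 2 * (h * ∑ k ∈ Icc (-(N : ℤ)) N, quadDecay (h * k)) + 4 * C₀ * h ^ 2 := by
      rw [← mul_sum]; ring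
    _ ≤ C₂ * h ^ 2 * (h + 2) + 4 * C₀ * h ^ 2 := by
      gcongr
      exact mul_sum_Icc_quadDecay_le hh N
    _ ≤ 4 * (C₀ + C₂) * h ^ 2 := by nlinarith [mul_nonneg hC₂ (sq_nonneg h)]

lemma exists_sampled_expSum_bound (hg : ∀ y, HasDerivAt g (g' y) y)
    (hg' : ∀ y, HasDerivAt g' (g'' y) y) (decay : g =O[⊤] quadDecay)
    (decay'' : g'' =O[⊤] quadDecay) :
    ∃ C, 0 ≤ C ∧ ∀ (N : ℕ) (h : ℝ), 0 < h → h ≤ 2 → 1 ≤ h ^ 2 * N → ∀ x : ℝ,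
      h * (h ^ 2 + (2 - 2 * Real.cos x)) * ‖expSum N (fun k => (g (h * k) : ℂ)) x‖
        ≤ C * h ^ 2 := by
  obtain ⟨C₀, hC₀, bound⟩ := exists_abs_le_quadDecay decay
  obtain ⟨C₂, hC₂, bound''⟩ := exists_abs_le_quadDecay decay''
  refine ⟨8 * C₀ + 72 * C₂, by positivity, fun N h h0 h2 hhN x => ?_⟩
  have size := mul_norm_sampled_expSum_le (N := N) hC₀ bound h0 x
  have oscillation := two_sub_two_cos_mul_norm_sampled_expSum_le hC₀ (by positivity) bound
    (abs_second_difference_le_quadDecay hg hg' hC₂ bound'' h0.le h2) h0 h2 hhN x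
  nlinarith [mul_le_mul_of_nonneg_left size (sq_nonneg h), mul_nonneg hC₀ (sq_nonneg h)]

end Sampling

/-- The Gaussian monomial `y^a e^{-y²}`. -/
def gaussMonomial (a : ℕ) (y : ℝ) : ℝ := y ^ a * Real.exp (-y ^ 2)

lemma hasDerivAt_gaussMonomial (a : ℕ) (y : ℝ) :
    HasDerivAt (gaussMonomial a) (a * gaussMonomial (a - 1) y - 2 * gaussMonomial (a + 1) y) y := by
  have hexp : HasDerivAt (fun y : ℝ => -y ^ 2) (-(2 * y)) y := by
    simpa using (hasDerivAt_pow 2 y).fun_neg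
  refine ((hasDerivAt_pow a y).mul hexp.exp).congr_deriv ?_
  simp only [gaussMonomial]
  ring

lemma abs_pow_mul_exp_neg_sq_le (n : ℕ) (y : ℝ) :
    |y| ^ n * Real.exp (-y ^ 2) ≤ 1 + n.factorial := by
  have hpow : |y| ^ n ≤ 1 + (y ^ 2) ^ n := by
    rcases le_total |y| 1 with h | h
    · linarith [pow_le_one₀ (n := n) (abs_nonneg y) h, pow_nonneg (sq_nonneg y) n]
    · rw [← sq_abs]
      linarith [pow_le_pow_left₀ (abs_nonneg y) (show |y| ≤ |y| ^ 2 by nlinarith) n]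
  have hexp : (1 + (y ^ 2) ^ n) ≤ (1 + n.factorial) * Real.exp (y ^ 2) := by
    have := Real.pow_div_factorial_le_exp (y ^ 2) (sq_nonneg y) n
    rw [div_le_iff₀ (by positivity)] at this
    linarith [Real.one_le_exp (sq_nonneg y)]
  rw [Real.exp_neg, ← div_eq_mul_inv, div_le_iff₀ (Real.exp_pos _)]
  exact hpow.trans hexp

lemma gaussMonomial_isBigO (a : ℕ) : gaussMonomial a =O[⊤] quadDecay := by
  refine isBigO_top.2 ⟨(1 + a.factorial) + 2 * (1 + (a + 1).factorial) + (1 + (a + 2).factorial),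
    fun y => ?_⟩
  rw [quadDecay, norm_inv, ← div_eq_mul_inv,
    Real.norm_of_nonneg (by positivity : 0 ≤ (1 + |y|) ^ 2), le_div_iff₀ (by positivity),
    gaussMonomial, norm_mul, norm_pow, Real.norm_eq_abs,
    Real.norm_of_nonneg (Real.exp_pos _).le]
  calc |y| ^ a * Real.exp (-y ^ 2) * (1 + |y|) ^ 2
      = |y| ^ a * Real.exp (-y ^ 2) + 2 * (|y| ^ (a + 1) * Real.exp (-y ^ 2))
        + |y| ^ (a + 2) * Real.exp (-y ^ 2) := by ring
    _ ≤ _ := by gcongr <;> exact abs_pow_mul_exp_neg_sq_le _ y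

lemma exists_gaussMonomial_expSum_bound (a : ℕ) :
    ∃ C, 0 ≤ C ∧ ∀ (N : ℕ) (h : ℝ), 0 < h → h ≤ 2 → 1 ≤ h ^ 2 * N → ∀ x : ℝ,
      h * (h ^ 2 + (2 - 2 * Real.cos x)) * ‖expSum N (fun k => (gaussMonomial a (h * k) : ℂ)) x‖
        ≤ C * h ^ 2 :=
  exists_sampled_expSum_bound (hasDerivAt_gaussMonomial a)
    (fun y => ((hasDerivAt_gaussMonomial (a - 1) y).const_mul _).sub
      ((hasDerivAt_gaussMonomial (a + 1) y).const_mul _))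
    (gaussMonomial_isBigO a)
    (((((gaussMonomial_isBigO _).const_mul_left _).sub
        ((gaussMonomial_isBigO _).const_mul_left _)).const_mul_left _).sub
      ((((gaussMonomial_isBigO _).const_mul_left _).sub
        ((gaussMonomial_isBigO _).const_mul_left _)).const_mul_left _))

lemma exists_sum_abs_gaussMonomial_le (a : ℕ) :
    ∃ C, 0 ≤ C ∧ ∀ N : ℕ, ∑ k ∈ Icc (-(N : ℤ)) N, |gaussMonomial a k| ≤ C := by
  obtain ⟨C, hC, bound⟩ := exists_abs_le_quadDecay (gaussMonomial_isBigO a)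
  refine ⟨C * 3, by positivity, fun N => ?_⟩
  calc ∑ k ∈ Icc (-(N : ℤ)) N, |gaussMonomial a k|
      ≤ C * ∑ k ∈ Icc (-(N : ℤ)) N, quadDecay k := by
        rw [mul_sum]
        exact sum_le_sum fun k _ => bound k
    _ ≤ C * 3 := by
        have := mul_sum_Icc_quadDecay_le one_pos N
        simp only [one_mul] at this
        gcongr
        linarith

/-! ### Plane waves and trigonometric sums -/

section Waves

variable {d : ℕ}

/-- The phase `k · x` of a frequency `k ∈ ℤ^d` at a point `x ∈ ℝ^d`. -/
def phase (k : Fin d → ℤ) (x : Fin d → ℝ) : ℝ := ∑ i, k i * x i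

/-- The plane wave `e^{i k·x}`, as a `2π`-periodic function on `ℝ^d`. -/
def wave (k : Fin d → ℤ) (x : Fin d → ℝ) : ℂ := Complex.exp (Complex.I * phase k x)

/-- The squared Euclidean length `|k|²` of a frequency. -/
def freqNormSq (k : Fin d → ℤ) : ℝ := ∑ i, (k i : ℝ) ^ 2

/-- The frequencies `k` with `|k_i| ≤ N` for all `i`. -/
def freqBox (d N : ℕ) : Finset (Fin d → ℤ) := Fintype.piFinset fun _ => Icc (-(N : ℤ)) N

/-- The trigonometric polynomial `∑_{k ∈ s} a_k e^{i k·x}`. -/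
def trigSum (s : Finset (Fin d → ℤ)) (a : (Fin d → ℤ) → ℂ) (x : Fin d → ℝ) : ℂ :=
  ∑ k ∈ s, a k * wave k x

lemma continuous_phase (k : Fin d → ℤ) : Continuous (phase k) := by
  unfold phase
  fun_prop

lemma phase_add_period (k : Fin d → ℤ) (x : Fin d → ℝ) (m : Fin d → ℤ) :
    phase k (x + fun i => 2 * π * (m i : ℝ)) = phase k x + (∑ i, k i * m i : ℤ) * (2 * π) := by
  simp only [phase, Pi.add_apply, mul_add, sum_add_distrib]
  push_cast
  rw [sum_mul]
  congr 1
  exact sum_congr rfl fun i _ => by ring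

lemma continuous_wave (k : Fin d → ℤ) : Continuous (wave k) := by
  unfold wave
  have := continuous_phase k
  fun_prop

lemma norm_wave (k : Fin d → ℤ) (x : Fin d → ℝ) : ‖wave k x‖ = 1 :=
  Complex.norm_exp_I_mul_ofReal _

lemma wave_add (k l : Fin d → ℤ) (x : Fin d → ℝ) : wave (k + l) x = wave k x * wave l x := by
  rw [wave, wave, wave, ← Complex.exp_add, ← mul_add, ← Complex.ofReal_add]
  simp [phase, add_mul, sum_add_distrib]

lemma conj_wave (k : Fin d → ℤ) (x : Fin d → ℝ) :
    (starRingEnd ℂ) (wave k x) = wave (-k) x := by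
  rw [wave, wave, ← Complex.exp_conj]
  simp [phase]

lemma wave_sub_apply (k : Fin d → ℤ) (x y : Fin d → ℝ) :
    wave k (x - y) = wave k x * wave (-k) y := by
  rw [wave, wave, wave, ← Complex.exp_add, ← mul_add, ← Complex.ofReal_add]
  simp [phase, mul_add, sum_add_distrib, sub_eq_add_neg]

lemma wave_add_period (k : Fin d → ℤ) (x : Fin d → ℝ) (m : Fin d → ℤ) :
    wave k (x + fun i => 2 * π * (m i : ℝ)) = wave k x := by
  rw [wave, wave, phase_add_period, Complex.exp_eq_exp_iff_exists_int]
  refine ⟨∑ i, k i * m i, ?_⟩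
  push_cast
  ring

lemma wave_eq_prod (k : Fin d → ℤ) (x : Fin d → ℝ) :
    wave k x = ∏ i, Complex.exp (Complex.I * (k i * x i)) := by
  rw [wave, phase, ← Complex.exp_sum, ← mul_sum]
  push_cast
  rfl

lemma freqNormSq_nonneg (k : Fin d → ℤ) : 0 ≤ freqNormSq k := by
  unfold freqNormSq
  positivity

lemma freqNormSq_neg (k : Fin d → ℤ) : freqNormSq (-k) = freqNormSq k := by
  simp [freqNormSq]

lemma freqNormSq_eq_zero {k : Fin d → ℤ} : freqNormSq k = 0 ↔ k = 0 := by
  simp [freqNormSq, sum_eq_zero_iff_of_nonneg, sq_nonneg, funext_iff]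

lemma freqNormSq_pos {k : Fin d → ℤ} (hk : k ≠ 0) : 0 < freqNormSq k :=
  (freqNormSq_nonneg k).lt_of_ne' (freqNormSq_eq_zero.not.2 hk)

lemma one_le_freqNormSq {k : Fin d → ℤ} (hk : k ≠ 0) : 1 ≤ freqNormSq k := by
  have hpos := freqNormSq_pos hk
  have hcast : freqNormSq k = ((∑ i, k i ^ 2 : ℤ) : ℝ) := by simp [freqNormSq]
  rw [hcast] at hpos ⊢
  exact_mod_cast hpos

lemma mem_freqBox {N : ℕ} {k : Fin d → ℤ} : k ∈ freqBox d N ↔ ∀ i, -(N : ℤ) ≤ k i ∧ k i ≤ N := by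
  simp [freqBox]

lemma neg_mem_freqBox {N : ℕ} {k : Fin d → ℤ} : -k ∈ freqBox d N ↔ k ∈ freqBox d N := by
  simp only [mem_freqBox, Pi.neg_apply]
  exact forall_congr' fun i => by omega

lemma eventually_mem_freqBox (k : Fin d → ℤ) : ∀ᶠ N in atTop, k ∈ freqBox d N := by
  simp only [mem_freqBox, eventually_all]
  intro i
  filter_upwards [eventually_ge_atTop (k i).natAbs] with N hN
  omega

lemma sum_freqBox_prod {R : Type*} [CommSemiring R] (N : ℕ) (f : Fin d → ℤ → R) :
    ∑ k ∈ freqBox d N, ∏ i, f i (k i) = ∏ i, ∑ k ∈ Icc (-(N : ℤ)) N, f i k :=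
  (prod_univ_sum _ _).symm

variable (s : Finset (Fin d → ℤ)) (a : (Fin d → ℤ) → ℂ)

lemma continuous_trigSum : Continuous (trigSum s a) :=
  continuous_finsetSum _ fun k _ => continuous_const.mul (continuous_wave k)

lemma norm_trigSum_le (x : Fin d → ℝ) : ‖trigSum s a x‖ ≤ ∑ k ∈ s, ‖a k‖ :=
  (norm_sum_le _ _).trans_eq <| by simp only [norm_mul, norm_wave, mul_one]

lemma trigSum_add_period (x : Fin d → ℝ) (m : Fin d → ℤ) :
    trigSum s a (x + fun i => 2 * π * (m i : ℝ)) = trigSum s a x := by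
  simp only [trigSum, wave_add_period]

end Waves

/-! ### The mollified biharmonic kernel -/

section HeatSums

variable {d : ℕ}

/-- The monomial `∏ i, k_i ^ m_i` in a frequency, i.e. the symbol of `∂^m` up to a power of `i`. -/
def freqMonomial (m : Fin d → ℕ) (k : Fin d → ℤ) : ℝ := ∏ i, (k i : ℝ) ^ m i

/-- The truncated derivative `∑_{k ∈ freqBox d N} (∏ i, k_i ^ m_i) e^{-τ|k|²} e^{i k·x}` of the
periodic heat kernel at time `τ`. -/
def heatSum (m : Fin d → ℕ) (N : ℕ) (τ : ℝ) : (Fin d → ℝ) → ℂ :=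
  trigSum (freqBox d N) fun k => (freqMonomial m k * Real.exp (-τ * freqNormSq k) : ℝ)

/-- The distance of `x` to `(2πℤ)^d`, measured by chords: `|x|² ~ ∑ i, |e^{i x_i} - 1|²`. -/
def chordDist (x : Fin d → ℝ) : ℝ := √(∑ i, (2 - 2 * Real.cos (x i)))

lemma chordDist_nonneg (x : Fin d → ℝ) : 0 ≤ chordDist x := Real.sqrt_nonneg _

lemma chordDist_sq (x : Fin d → ℝ) : chordDist x ^ 2 = ∑ i, (2 - 2 * Real.cos (x i)) :=
  Real.sq_sqrt (sum_nonneg fun i _ => by linarith [Real.cos_le_one (x i)])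

lemma prod_gaussMonomial (m : Fin d → ℕ) (h : ℝ) (k : Fin d → ℤ) :
    ∏ i, gaussMonomial (m i) (h * k i)
      = h ^ (∑ i, m i) * (freqMonomial m k * Real.exp (-h ^ 2 * freqNormSq k)) := by
  simp only [gaussMonomial, freqMonomial, freqNormSq, mul_pow, prod_mul_distrib,
    prod_pow_eq_pow_sum, mul_sum, Real.exp_sum, neg_mul, mul_assoc]

lemma prod_expSum_gaussMonomial (m : Fin d → ℕ) (N : ℕ) (h : ℝ) (x : Fin d → ℝ) :
    ∏ i, expSum N (fun k => (gaussMonomial (m i) (h * k) : ℂ)) (x i)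
      = (h ^ (∑ i, m i) : ℝ) * heatSum m N (h ^ 2) x := by
  simp only [expSum]
  rw [← sum_freqBox_prod N fun i k =>
    (gaussMonomial (m i) (h * k) : ℂ) * Complex.exp (Complex.I * (k * x i)), heatSum, trigSum,
    mul_sum]
  refine sum_congr rfl fun k _ => ?_
  rw [prod_mul_distrib, ← wave_eq_prod, ← mul_assoc, ← Complex.ofReal_mul, ← prod_gaussMonomial,
    Complex.ofReal_prod]

lemma exists_sum_freqMonomial_mul_exp_le (m : Fin d → ℕ) :
    ∃ C, 0 ≤ C ∧ ∀ N, ∑ k ∈ freqBox d N, |freqMonomial m k| * Real.exp (-freqNormSq k) ≤ C := by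
  choose C hC bound using fun i => exists_sum_abs_gaussMonomial_le (m i)
  refine ⟨∏ i, C i, prod_nonneg fun i _ => hC i, fun N => ?_⟩
  calc ∑ k ∈ freqBox d N, |freqMonomial m k| * Real.exp (-freqNormSq k)
      = ∑ k ∈ freqBox d N, ∏ i, |gaussMonomial (m i) (k i)| := by
        refine sum_congr rfl fun k _ => ?_
        have := prod_gaussMonomial m 1 k
        simp only [one_mul, one_pow, neg_one_mul] at this
        rw [← abs_prod, this, abs_mul, abs_of_pos (Real.exp_pos _)]
    _ = ∏ i, ∑ k ∈ Icc (-(N : ℤ)) N, |gaussMonomial (m i) k| :=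
        sum_freqBox_prod N fun i (k : ℤ) => |gaussMonomial (m i) k|
    _ ≤ ∏ i, C i := prod_le_prod (fun i _ => sum_nonneg fun _ _ => abs_nonneg _)
        fun i _ => bound i N

end HeatSums

lemma exists_heatSum_bound {m : Fin 2 → ℕ} (hm : ∑ i, m i = 3) :
    ∃ C, 0 ≤ C ∧ ∀ (N : ℕ) (h : ℝ), 0 < h → h ≤ 2 → 1 ≤ h ^ 2 * N → ∀ x,
      h ^ 3 * (h ^ 2 + chordDist x ^ 2) * ‖heatSum m N (h ^ 2) x‖ ≤ C := by
  choose C hC bound using fun i => exists_gaussMonomial_expSum_bound (m i)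
  refine ⟨C 0 * C 1, mul_nonneg (hC 0) (hC 1), fun N h h0 h2 hhN x => ?_⟩
  set E : Fin 2 → ℝ := fun i => ‖expSum N (fun k => (gaussMonomial (m i) (h * k) : ℂ)) (x i)‖
  have factor : E 0 * E 1 = h ^ 3 * ‖heatSum m N (h ^ 2) x‖ := by
    have := congrArg norm (prod_expSum_gaussMonomial m N h x)
    rwa [hm, norm_prod, Fin.prod_univ_two, norm_mul, Complex.norm_real,
      Real.norm_of_nonneg (by positivity)] at this
  have cos_nonneg (i : Fin 2) : 0 ≤ 2 - 2 * Real.cos (x i) := by linarith [Real.cos_le_one (x i)]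
  have chord : h ^ 2 * (h ^ 2 + chordDist x ^ 2)
      ≤ (h ^ 2 + (2 - 2 * Real.cos (x 0))) * (h ^ 2 + (2 - 2 * Real.cos (x 1))) := by
    rw [chordDist_sq, Fin.sum_univ_two]
    nlinarith [mul_nonneg (cos_nonneg 0) (cos_nonneg 1)]
  refine le_of_mul_le_mul_left ?_ (pow_pos h0 4)
  calc h ^ 4 * (h ^ 3 * (h ^ 2 + chordDist x ^ 2) * ‖heatSum m N (h ^ 2) x‖)
      = h ^ 2 * (h ^ 2 * (h ^ 2 + chordDist x ^ 2)) * (h ^ 3 * ‖heatSum m N (h ^ 2) x‖) := by ring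
    _ ≤ h ^ 2 * ((h ^ 2 + (2 - 2 * Real.cos (x 0))) * (h ^ 2 + (2 - 2 * Real.cos (x 1))))
          * (h ^ 3 * ‖heatSum m N (h ^ 2) x‖) := by gcongr
    _ = h * (h ^ 2 + (2 - 2 * Real.cos (x 0))) * E 0
          * (h * (h ^ 2 + (2 - 2 * Real.cos (x 1))) * E 1) := by rw [← factor]; ring
    _ ≤ C 0 * h ^ 2 * (C 1 * h ^ 2) :=
        mul_le_mul (bound 0 N h h0 h2 hhN (x 0)) (bound 1 N h h0 h2 hhN (x 1))
          (mul_nonneg (mul_nonneg h0.le (add_nonneg (sq_nonneg h) (cos_nonneg 1))) (norm_nonneg _))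
          (mul_nonneg (hC 0) (sq_nonneg h))
    _ = h ^ 4 * (C 0 * C 1) := by ring

lemma integral_mul_exp_neg_mul {n : ℝ} (hn : n ≠ 0) :
    ∫ t in (0 : ℝ)..1, t * Real.exp (-t * n)
      = 1 / n ^ 2 - Real.exp (-n) * (1 / n + 1 / n ^ 2) := by
  have antideriv : ∀ t ∈ Set.uIcc (0 : ℝ) 1, HasDerivAt
      (fun t : ℝ => -Real.exp (-t * n) * (t / n + 1 / n ^ 2)) (t * Real.exp (-t * n)) t := by
    intro t _
    have hlin : HasDerivAt (fun t : ℝ => -t * n) (-n) t := by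
      simpa using ((hasDerivAt_id t).fun_neg.mul_const n)
    have haff : HasDerivAt (fun t : ℝ => t / n + 1 / n ^ 2) (1 / n) t :=
      ((hasDerivAt_id t).div_const n).add_const _
    refine (hlin.exp.fun_neg.mul haff).congr_deriv ?_
    field_simp
    ring
  rw [intervalIntegral.integral_eq_sub_of_hasDerivAt antideriv
    (Continuous.intervalIntegrable (by fun_prop) _ _)]
  simp only [neg_mul, one_mul, neg_zero, zero_mul, Real.exp_zero, zero_div, zero_add,
    sub_neg_eq_add]
  ring

/-- The third-order derivative `∂^m` (up to a power of `i`), `|m| = 3`, of the Green function of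
`Δ²` on the torus, mollified by the heat flow at time `1/N` and truncated to `freqBox d N`. The
frequency `k = 0` contributes nothing, because division by `0` gives `0`. -/
def biharmonicKernel {d : ℕ} (m : Fin d → ℕ) (N : ℕ) : (Fin d → ℝ) → ℂ :=
  trigSum (freqBox d N) fun k =>
    (freqMonomial m k * Real.exp (-freqNormSq k / N) / freqNormSq k ^ 2 : ℝ)

/-- What is left of `biharmonicKernel` once its heat-flow representation is cut off at time `1`. -/
def kernelRemainder {d : ℕ} (m : Fin d → ℕ) (N : ℕ) : (Fin d → ℝ) → ℂ :=
  trigSum (freqBox d N) fun k => (freqMonomial m k * Real.exp (-freqNormSq k / N)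
    * (Real.exp (-freqNormSq k) * (1 / freqNormSq k + 1 / freqNormSq k ^ 2)) : ℝ)

section Kernel

variable {d : ℕ} {m : Fin d → ℕ}

lemma freqMonomial_zero (hm : ∑ i, m i ≠ 0) : freqMonomial m 0 = 0 := by
  obtain ⟨i, -, hi⟩ := exists_ne_zero_of_sum_ne_zero hm
  exact prod_eq_zero (mem_univ i) (by simp [hi])

lemma biharmonicKernel_eq (hm : ∑ i, m i ≠ 0) (N : ℕ) (x : Fin d → ℝ) :
    biharmonicKernel m N x
      = (∫ t in (0 : ℝ)..1, (t : ℂ) * heatSum m N (t + 1 / N) x) + kernelRemainder m N x := by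
  have expand (t : ℝ) : (t : ℂ) * heatSum m N (t + 1 / N) x
      = ∑ k ∈ freqBox d N, ((t * Real.exp (-t * freqNormSq k) : ℝ) : ℂ) *
        ((freqMonomial m k * Real.exp (-freqNormSq k / N) : ℝ) * wave k x) := by
    rw [heatSum, trigSum, mul_sum]
    refine sum_congr rfl fun k _ => ?_
    rw [show -(t + 1 / (N : ℝ)) * freqNormSq k = -t * freqNormSq k + -freqNormSq k / N by ring,
      Real.exp_add]
    push_cast
    ring
  simp_rw [expand]
  rw [intervalIntegral.integral_finsetSum fun k _ =>
    Continuous.intervalIntegrable (by fun_prop) _ _, kernelRemainder, trigSum, ← sum_add_distrib,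
    biharmonicKernel, trigSum]
  refine sum_congr rfl fun k _ => ?_
  rw [intervalIntegral.integral_mul_const, intervalIntegral.integral_ofReal]
  by_cases hk : k = 0
  · simp [hk, freqMonomial_zero hm]
  · rw [integral_mul_exp_neg_mul (freqNormSq_pos hk).ne']
    push_cast
    ring

lemma exists_norm_kernelRemainder_le (m : Fin d → ℕ) :
    ∃ C, 0 ≤ C ∧ ∀ N x, ‖kernelRemainder m N x‖ ≤ C := by
  obtain ⟨C, hC, bound⟩ := exists_sum_freqMonomial_mul_exp_le m
  refine ⟨C * 2, by positivity, fun N x => (norm_trigSum_le _ _ x).trans ?_⟩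
  refine le_trans ?_ (mul_le_mul_of_nonneg_right (bound N) zero_le_two)
  rw [sum_mul]
  refine sum_le_sum fun k _ => ?_
  have hk := freqNormSq_nonneg k
  have hexp : Real.exp (-freqNormSq k / N) ≤ 1 :=
    Real.exp_le_one_iff.2 (div_nonpos_of_nonpos_of_nonneg (by linarith) N.cast_nonneg)
  have hinv : 1 / freqNormSq k + 1 / freqNormSq k ^ 2 ≤ 2 := by
    rcases eq_or_ne k 0 with rfl | hk0
    · simp [freqNormSq]
    · have h1 := one_le_freqNormSq hk0
      have : 1 / freqNormSq k ≤ 1 := div_le_one_of_le₀ h1 hk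
      have : 1 / freqNormSq k ^ 2 ≤ 1 := div_le_one_of_le₀ (one_le_pow₀ h1) (by positivity)
      linarith
  rw [Complex.norm_real, Real.norm_eq_abs, abs_mul, abs_mul, abs_of_pos (Real.exp_pos _),
    abs_of_nonneg (by positivity : 0 ≤ Real.exp (-freqNormSq k) * _)]
  calc _ ≤ |freqMonomial m k| * 1 * (Real.exp (-freqNormSq k) * 2) := by gcongr
    _ = _ := by ring

end Kernel

lemma integral_inv_sqrt_mul_sq_le {σ r : ℝ} (hσ : 0 < σ) (hr : 0 < r) :
    IntervalIntegrable (fun t => 1 / (√(t + σ) * (√(t + σ) + r) ^ 2)) volume 0 1 ∧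
    ∫ t in (0 : ℝ)..1, 1 / (√(t + σ) * (√(t + σ) + r) ^ 2) ≤ 2 / r := by
  have sqrt_pos : ∀ t ∈ Set.uIcc (0 : ℝ) 1, 0 < √(t + σ) := fun t ht =>
    Real.sqrt_pos.2 (by linarith [(Set.uIcc_of_le (zero_le_one' ℝ) ▸ ht).1])
  have hcont : ContinuousOn (fun t => 1 / (√(t + σ) * (√(t + σ) + r) ^ 2)) (Set.uIcc 0 1) := by
    intro t ht
    have := sqrt_pos t ht
    exact (ContinuousAt.div (by fun_prop) (by fun_prop) (by positivity)).continuousWithinAt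
  have antideriv : ∀ t ∈ Set.uIcc (0 : ℝ) 1, HasDerivAt (fun t => -2 * (√(t + σ) + r)⁻¹)
      (1 / (√(t + σ) * (√(t + σ) + r) ^ 2)) t := by
    intro t ht
    have := sqrt_pos t ht
    have hsqrt := (((hasDerivAt_id t).add_const σ).sqrt (Real.sqrt_pos.1 this).ne').add_const r
    refine ((hsqrt.fun_inv (by positivity)).const_mul (-2)).congr_deriv ?_
    simp only [id]
    field_simp
  refine ⟨hcont.intervalIntegrable, ?_⟩
  rw [intervalIntegral.integral_eq_sub_of_hasDerivAt antideriv hcont.intervalIntegrable]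
  have hone : 0 ≤ (√(1 + σ) + r)⁻¹ := by positivity
  have hzero : (√(0 + σ) + r)⁻¹ ≤ r⁻¹ := by
    gcongr
    linarith [Real.sqrt_nonneg (0 + σ)]
  rw [div_eq_mul_inv]
  linarith

lemma norm_mul_heatSum_le {m : Fin 2 → ℕ} {C : ℝ} {N : ℕ} (hN : 1 ≤ N) {x : Fin 2 → ℝ}
    (bound : ∀ h : ℝ, 0 < h → h ≤ 2 → 1 ≤ h ^ 2 * N →
      h ^ 3 * (h ^ 2 + chordDist x ^ 2) * ‖heatSum m N (h ^ 2) x‖ ≤ C)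
    (hx : 0 < chordDist x) {t : ℝ} (ht : t ∈ Set.Ioc (0 : ℝ) 1) :
    ‖(t : ℂ) * heatSum m N (t + 1 / N) x‖
      ≤ 2 * C * (1 / (√(t + 1 / N) * (√(t + 1 / N) + chordDist x) ^ 2)) := by
  have hN' : (1 : ℝ) ≤ N := by exact_mod_cast hN
  have hinv : 0 < 1 / (N : ℝ) ∧ 1 / (N : ℝ) ≤ 1 :=
    ⟨by positivity, div_le_one_of_le₀ hN' (by positivity)⟩
  have ht0 : 0 < t + 1 / N := by linarith [ht.1]
  set h := √(t + 1 / N)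
  have h0 : 0 < h := Real.sqrt_pos.2 ht0
  have hsq : h ^ 2 = t + 1 / N := Real.sq_sqrt ht0.le
  have hhN : 1 ≤ h ^ 2 * N := by
    rw [hsq, add_mul, one_div, inv_mul_cancel₀ (by positivity)]
    nlinarith [ht.1]
  have hC := bound h h0 (by nlinarith [ht.2]) hhN
  rw [← hsq, norm_mul, Complex.norm_real, Real.norm_of_nonneg ht.1.le, mul_one_div,
    le_div_iff₀ (by positivity)]
  calc t * ‖heatSum m N (h ^ 2) x‖ * (h * (h + chordDist x) ^ 2)
      ≤ h ^ 2 * ‖heatSum m N (h ^ 2) x‖ * (h * (2 * (h ^ 2 + chordDist x ^ 2))) := by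
        gcongr
        · linarith
        · nlinarith [sq_nonneg (h - chordDist x)]
    _ = 2 * (h ^ 3 * (h ^ 2 + chordDist x ^ 2) * ‖heatSum m N (h ^ 2) x‖) := by ring
    _ ≤ 2 * C := by linarith

theorem exists_chordDist_mul_norm_biharmonicKernel_le {m : Fin 2 → ℕ} (hm : ∑ i, m i = 3) :
    ∃ C, 0 ≤ C ∧ ∀ N : ℕ, 1 ≤ N → ∀ x, chordDist x * ‖biharmonicKernel m N x‖ ≤ C := by
  obtain ⟨C, hC, heat⟩ := exists_heatSum_bound hm
  obtain ⟨D, hD, remainder⟩ := exists_norm_kernelRemainder_le m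
  refine ⟨4 * C + 3 * D, by positivity, fun N hN x => ?_⟩
  rcases (chordDist_nonneg x).eq_or_lt with hx | hx
  · rw [← hx, zero_mul]
    positivity
  have chord_le : chordDist x ≤ 3 := by
    have := chordDist_sq x
    rw [Fin.sum_univ_two] at this
    nlinarith [Real.neg_one_le_cos (x 0), Real.neg_one_le_cos (x 1)]
  obtain ⟨integrable, integral_le⟩ := integral_inv_sqrt_mul_sq_le
    (σ := 1 / N) (one_div_pos.2 (by exact_mod_cast hN)) hx
  have main : ‖∫ t in (0 : ℝ)..1, (t : ℂ) * heatSum m N (t + 1 / N) x‖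
      ≤ 2 * C * (2 / chordDist x) := by
    refine (intervalIntegral.norm_integral_le_of_norm_le zero_le_one
      (Eventually.of_forall fun t ht =>
        norm_mul_heatSum_le hN (fun h h0 h2 hhN => heat N h h0 h2 hhN x) hx ht)
      (integrable.const_mul _)).trans ?_
    rw [intervalIntegral.integral_const_mul]
    gcongr
  rw [biharmonicKernel_eq (by omega)]
  calc _ ≤ chordDist x * (2 * C * (2 / chordDist x) + D) := by
        gcongr
        exact (norm_add_le _ _).trans (add_le_add main (remainder N x))
    _ = 4 * C + chordDist x * D := by field_simp; ring
    _ ≤ 4 * C + 3 * D := by gcongr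

/-! ### Fourier series on the torus -/

/-- The normalised Lebesgue measure of the torus `(ℝ/2πℤ)^d`, carried by the fundamental domain
`(0, 2π]^d`. -/
def torusMeasure (d : ℕ) : Measure (Fin d → ℝ) :=
  ENNReal.ofReal ((2 * π) ^ d)⁻¹ • volume.restrict (Set.univ.pi fun _ => Set.Ioc 0 (2 * π))

/-- The `k`-th Fourier coefficient of a function on the torus. -/
def torusCoeff {d : ℕ} (f : (Fin d → ℝ) → ℂ) (k : Fin d → ℤ) : ℂ :=
  ∫ x, f x * wave (-k) x ∂torusMeasure d

/-- The representative in `(0, 2π]^d` of a point of the unit torus; it transports Mathlib's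
Fourier basis to the plane waves. -/
def torusPoint {d : ℕ} (t : UnitAddTorus (Fin d)) : Fin d → ℝ :=
  fun i => 2 * π * (AddCircle.equivIoc 1 0 (t i)).1

lemma tendsto_sum_smul_hilbertBasis {ι κ 𝕜 E : Type*} [RCLike 𝕜] [NormedAddCommGroup E]
    [InnerProductSpace 𝕜 E] (b : HilbertBasis ι 𝕜 E) {l : Filter κ} [l.IsCountablyGenerated]
    {s : κ → Finset ι} {w : κ → ι → 𝕜} (hs : ∀ i, ∀ᶠ n in l, i ∈ s n)
    (hw_le : ∀ n i, ‖1 - w n i‖ ≤ 1) (hw : ∀ i, Tendsto (fun n => w n i) l (𝓝 1)) (x : E) :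
    Tendsto (fun n => ∑ i ∈ s n, (w n i * b.repr x i) • b i) l (𝓝 x) := by
  classical
  have hnorm : ∀ y : E, HasSum (fun i => ‖b.repr y i‖ ^ 2) (‖y‖ ^ 2) := fun y => by
    simpa using lp.hasSum_norm (by simp) (b.repr y)
  have hrepr : ∀ n i, b.repr (∑ i ∈ s n, (w n i * b.repr x i) • b i - x) i =
      -((if i ∈ s n then 1 - w n i else 1) * b.repr x i) := fun n i => by
    have hsum : b.repr (∑ j ∈ s n, (w n j * b.repr x j) • b j) i =
        if i ∈ s n then w n i * b.repr x i else 0 := by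
      rw [b.repr_apply_apply]
      simp [inner_sum, inner_smul_right, orthonormal_iff_ite.1 b.orthonormal]
    rw [map_sub, lp.coeFn_sub, Pi.sub_apply, hsum]
    split_ifs <;> ring
  have hsq : Tendsto (fun n => ‖∑ i ∈ s n, (w n i * b.repr x i) • b i - x‖ ^ 2) l (𝓝 0) := by
    simp only [← (hnorm _).tsum_eq, hrepr]
    rw [← tsum_zero (α := ℝ) (β := ι)]
    refine tendsto_tsum_of_dominated_convergence (hnorm x).summable (fun i => ?_)
      (.of_forall fun n i => ?_)
    · have hlim := (((hw i).const_sub 1).mul_const (b.repr x i)).neg.norm.pow 2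
      rw [sub_self, zero_mul, neg_zero, norm_zero, zero_pow two_ne_zero] at hlim
      refine hlim.congr' ?_
      filter_upwards [hs i] with n hn
      rw [if_pos hn]
    · rw [norm_neg, norm_mul, mul_pow, norm_mul, norm_pow, norm_norm, norm_pow, norm_norm]
      refine mul_le_of_le_one_left (by positivity) (pow_le_one₀ (norm_nonneg _) ?_)
      split_ifs
      exacts [hw_le n i, norm_one.le]
  rw [tendsto_iff_norm_sub_tendsto_zero]
  simpa [Real.sqrt_sq] using hsq.sqrt

section HaarMeasure

local instance : MeasureSpace UnitAddCircle := ⟨AddCircle.haarAddCircle⟩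

local instance : Measure.IsAddHaarMeasure (volume : Measure UnitAddCircle) :=
  inferInstanceAs (Measure.IsAddHaarMeasure AddCircle.haarAddCircle)

local instance : IsProbabilityMeasure (volume : Measure UnitAddCircle) :=
  inferInstanceAs (IsProbabilityMeasure AddCircle.haarAddCircle)

variable {d : ℕ}

lemma measurePreserving_torusPoint :
    MeasurePreserving (torusPoint (d := d)) volume (torusMeasure d) := by
  have hmk := UnitAddTorus.measurePreserving_equivPiIoc (d := Fin d) fun _ => (0 : ℝ)
  have hcube : MeasurableSet {x : Fin d → ℝ | ∀ i, x i ∈ Set.Ioc (0 : ℝ) (0 + 1)} :=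
    MeasurableSet.univ_pi' fun _ => measurableSet_Ioc
  have hscale : Measurable fun x : Fin d → ℝ => (2 * π) • x := measurable_const_smul _
  have himage : {x : Fin d → ℝ | ∀ i, x i ∈ Set.Ioc (0 : ℝ) (0 + 1)} =
      (fun x => (2 * π) • x) ⁻¹' Set.univ.pi fun _ => Set.Ioc 0 (2 * π) := by
    ext x
    simp [mul_pos_iff_of_pos_left two_pi_pos, mul_le_iff_le_one_right two_pi_pos]
  have hdilate : MeasurePreserving (fun x : Fin d → ℝ => (2 * π) • x)
      (volume.restrict {x | ∀ i, x i ∈ Set.Ioc (0 : ℝ) (0 + 1)}) (torusMeasure d) := by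
    refine ⟨hscale, ?_⟩
    rw [himage, ← Measure.restrict_map hscale (MeasurableSet.univ_pi fun _ => measurableSet_Ioc),
      Measure.map_addHaar_smul _ two_pi_pos.ne', Measure.restrict_smul, torusMeasure,
      Module.finrank_fin_fun, abs_of_pos (by positivity)]
  exact hdilate.comp ((measurePreserving_subtype_coe hcube).comp hmk)

instance : IsProbabilityMeasure (torusMeasure d) :=
  measurePreserving_torusPoint.map_eq ▸
    Measure.isProbabilityMeasure_map measurePreserving_torusPoint.aemeasurable

lemma wave_torusPoint (k : Fin d → ℤ) (t : UnitAddTorus (Fin d)) :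
    wave k (torusPoint t) = UnitAddTorus.mFourier k t := by
  have hcoe : ∀ i, ((AddCircle.equivIoc (1 : ℝ) 0 (t i)).1 : UnitAddCircle) = t i := fun i =>
    (AddCircle.equivIoc (1 : ℝ) 0).symm_apply_apply (t i)
  rw [wave_eq_prod]
  refine prod_congr rfl fun i _ => ?_
  rw [← hcoe i, fourier_coe_apply, torusPoint]
  push_cast
  congr 1
  ring

lemma integral_torusPoint {f : (Fin d → ℝ) → ℂ} (hf : AEStronglyMeasurable f (torusMeasure d)) :
    ∫ t, f (torusPoint t) = ∫ x, f x ∂torusMeasure d := by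
  rw [← measurePreserving_torusPoint.map_eq] at hf ⊢
  rw [integral_map measurePreserving_torusPoint.aemeasurable hf]

lemma integral_wave (k : Fin d → ℤ) :
    ∫ x, wave k x ∂torusMeasure d = if k = 0 then 1 else 0 := by
  have horth := orthonormal_iff_ite.1 (UnitAddTorus.orthonormal_mFourier (d := Fin d)) 0 k
  rw [ContinuousMap.inner_toLp] at horth
  rw [← integral_torusPoint (continuous_wave k).aestronglyMeasurable]
  simpa [wave_torusPoint, UnitAddTorus.mFourier_zero, eq_comm] using horth

lemma mFourierCoeff_comp_torusPoint {f : (Fin d → ℝ) → ℂ}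
    (hf : AEStronglyMeasurable f (torusMeasure d)) (k : Fin d → ℤ) :
    UnitAddTorus.mFourierCoeff (fun t => f (torusPoint t)) k = torusCoeff f k := by
  have hmeas : AEStronglyMeasurable (fun x => f x * wave (-k) x) (torusMeasure d) :=
    hf.mul (continuous_wave _).aestronglyMeasurable
  rw [torusCoeff, ← integral_torusPoint hmeas]
  simp only [wave_torusPoint, UnitAddTorus.mFourierCoeff, smul_eq_mul, mul_comm]

lemma coeFn_sum_smul_mFourierLp (s : Finset (Fin d → ℤ)) (a : (Fin d → ℤ) → ℂ) :
    ⇑(∑ k ∈ s, a k • UnitAddTorus.mFourierLp 2 k : Lp ℂ 2 (volume : Measure (UnitAddTorus (Fin d))))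
      =ᵐ[volume] fun t => trigSum s a (torusPoint t) := by
  have heq : (∑ k ∈ s, a k • UnitAddTorus.mFourierLp 2 k : Lp ℂ 2 volume) =
      ContinuousMap.toLp 2 volume ℂ (∑ k ∈ s, a k • UnitAddTorus.mFourier k) := by
    simp only [map_sum, map_smul, UnitAddTorus.mFourierLp]
  rw [heq]
  refine (ContinuousMap.coeFn_toLp _ _).trans (.of_eq <| funext fun t => ?_)
  simp [trigSum, wave_torusPoint]

theorem tendsto_eLpNorm_trigSum_sub {f : (Fin d → ℝ) → ℂ} (hf : MemLp f 2 (torusMeasure d))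
    {s : ℕ → Finset (Fin d → ℤ)} {w : ℕ → (Fin d → ℤ) → ℂ} (hs : ∀ k, ∀ᶠ N in atTop, k ∈ s N)
    (hw_le : ∀ N k, ‖1 - w N k‖ ≤ 1) (hw : ∀ k, Tendsto (fun N => w N k) atTop (𝓝 1)) :
    Tendsto (fun N => eLpNorm (fun x => trigSum (s N) (w N * torusCoeff f) x - f x) 2
      (torusMeasure d)) atTop (𝓝 0) := by
  have hF : MemLp (fun t => f (torusPoint t)) 2 volume :=
    hf.comp_measurePreserving measurePreserving_torusPoint
  have hlim := tendsto_sum_smul_hilbertBasis UnitAddTorus.mFourierBasis hs hw_le hw hF.toLp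
  rw [Lp.tendsto_Lp_iff_tendsto_eLpNorm] at hlim
  refine hlim.congr fun N => ?_
  have hmeas : AEStronglyMeasurable (fun x => trigSum (s N) (w N * torusCoeff f) x - f x)
    (torusMeasure d) := (continuous_trigSum _ _).aestronglyMeasurable.sub hf.aestronglyMeasurable
  rw [← eLpNorm_comp_measurePreserving hmeas measurePreserving_torusPoint]
  refine eLpNorm_congr_ae (EventuallyEq.sub ?_ .rfl)
  have hcoeff : UnitAddTorus.mFourierCoeff hF.toLp = torusCoeff f := funext fun k => by
    rw [← mFourierCoeff_comp_torusPoint hf.aestronglyMeasurable]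
    refine integral_congr_ae ?_
    filter_upwards [hF.coeFn_toLp] with t ht
    rw [ht]
  simp only [UnitAddTorus.coe_mFourierBasis, UnitAddTorus.mFourierBasis_repr, hcoeff]
  exact coeFn_sum_smul_mFourierLp _ _

end HaarMeasure

variable {d : ℕ}

lemma ae_eq_zero_of_torusCoeff_eq_zero {f : (Fin d → ℝ) → ℂ} (hf : MemLp f 2 (torusMeasure d))
    (hcoeff : ∀ k, torusCoeff f k = 0) : f =ᵐ[torusMeasure d] 0 := by
  have hlim := tendsto_eLpNorm_trigSum_sub hf (w := 1) eventually_mem_freqBox (by simp) (by simp)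
  have hconst : ∀ N, (fun x => trigSum (freqBox d N) (1 * torusCoeff f) x - f x) = -f := fun N => by
    funext x
    simp [trigSum, hcoeff]
  simp only [Pi.one_apply, hconst, eLpNorm_neg, tendsto_const_nhds_iff] at hlim
  exact (eLpNorm_eq_zero_iff hf.aestronglyMeasurable two_ne_zero).1 hlim

lemma torusCoeff_conj (f : (Fin d → ℝ) → ℂ) (k : Fin d → ℤ) :
    torusCoeff (fun x => starRingEnd ℂ (f x)) k = starRingEnd ℂ (torusCoeff f (-k)) := by
  rw [torusCoeff, torusCoeff, ← integral_conj]
  simp only [map_mul, conj_wave, neg_neg]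

lemma torusCoeff_neg (f : (Fin d → ℝ) → ℂ) (k : Fin d → ℤ) :
    torusCoeff (fun x => -f x) k = -torusCoeff f k := by
  simp only [torusCoeff, neg_mul, integral_neg]

lemma integrable_mul_wave {f : (Fin d → ℝ) → ℂ} (hf : Integrable f (torusMeasure d))
    (k : Fin d → ℤ) : Integrable (fun x => f x * wave k x) (torusMeasure d) :=
  hf.mul_bdd (c := 1) (continuous_wave k).aestronglyMeasurable
    (.of_forall fun x => (norm_wave k x).le)

lemma integral_mul_trigSum {f : (Fin d → ℝ) → ℂ} (hf : Integrable f (torusMeasure d))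
    (s : Finset (Fin d → ℤ)) (a : (Fin d → ℤ) → ℂ) :
    ∫ x, f x * trigSum s a x ∂torusMeasure d = ∑ k ∈ s, a k * torusCoeff f (-k) := by
  simp only [trigSum, mul_sum, mul_left_comm (f _)]
  rw [integral_finsetSum _ fun k _ => (integrable_mul_wave hf k).const_mul _]
  simp only [integral_const_mul, torusCoeff, neg_neg]

lemma torusCoeff_mul_trigSum {f : (Fin d → ℝ) → ℂ} (hf : Integrable f (torusMeasure d))
    (s : Finset (Fin d → ℤ)) (a : (Fin d → ℤ) → ℂ) (k : Fin d → ℤ) :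
    torusCoeff (fun x => f x * trigSum s a x) k = ∑ l ∈ s, a l * torusCoeff f (k - l) := by
  simp only [torusCoeff, mul_right_comm _ (trigSum s a _)]
  rw [integral_mul_trigSum (integrable_mul_wave hf (-k))]
  simp only [torusCoeff, mul_assoc, ← wave_add, neg_neg, neg_sub, neg_add_eq_sub]

lemma integral_trigSum_sub_mul {f : (Fin d → ℝ) → ℂ} (hf : Integrable f (torusMeasure d))
    (s : Finset (Fin d → ℤ)) (a : (Fin d → ℤ) → ℂ) (x : Fin d → ℝ) :
    ∫ y, trigSum s a (x - y) * f y ∂torusMeasure d = trigSum s (a * torusCoeff f) x := by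
  have hterm : ∀ y, trigSum s a (x - y) * f y =
      ∑ k ∈ s, a k * wave k x * (f y * wave (-k) y) := fun y => by
    rw [trigSum, sum_mul]
    exact sum_congr rfl fun k _ => by rw [wave_sub_apply]; ring
  simp only [hterm]
  rw [integral_finsetSum _ fun k _ => (integrable_mul_wave hf (-k)).const_mul _]
  simp only [integral_const_mul, trigSum, Pi.mul_apply, mul_right_comm, torusCoeff]

lemma torusCoeff_trigSum (s : Finset (Fin d → ℤ)) (a : (Fin d → ℤ) → ℂ) (k : Fin d → ℤ) :
    torusCoeff (trigSum s a) k = if k ∈ s then a k else 0 := by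
  have hint : Integrable (wave (-k)) (torusMeasure d) :=
    .of_bound (continuous_wave _).aestronglyMeasurable 1 (.of_forall fun x => (norm_wave _ x).le)
  have horth : ∀ l, torusCoeff (wave (-k)) (-l) = if k = l then 1 else 0 := fun l => by
    simp only [torusCoeff, ← wave_add, integral_wave, neg_neg, neg_add_eq_zero]
  have hpair := integral_mul_trigSum hint s a
  simp only [horth, mul_ite, mul_one, mul_zero, sum_ite_eq] at hpair
  simpa only [torusCoeff, mul_comm] using hpair

lemma integral_norm_trigSum_sq (s : Finset (Fin d → ℤ)) (a : (Fin d → ℤ) → ℂ) :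
    ∫ x, ‖trigSum s a x‖ ^ 2 ∂torusMeasure d = ∑ k ∈ s, ‖a k‖ ^ 2 := by
  have hint : Integrable (fun x => starRingEnd ℂ (trigSum s a x)) (torusMeasure d) :=
    .of_bound (Complex.continuous_conj.comp (continuous_trigSum s a)).aestronglyMeasurable
      (∑ k ∈ s, ‖a k‖) (.of_forall fun x => by
        rw [RCLike.norm_conj]
        exact norm_trigSum_le s a x)
  have hpair := integral_mul_trigSum hint s a
  simp only [Complex.conj_mul', torusCoeff_conj, neg_neg, torusCoeff_trigSum] at hpair
  rw [sum_congr rfl fun k hk => by rw [if_pos hk, Complex.mul_conj']] at hpair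
  rw [← Complex.ofReal_inj, ← integral_complex_ofReal]
  push_cast
  exact hpair

lemma T2_ae_eq_cube : T2 =ᵐ[volume] Set.univ.pi fun _ : Fin 2 => Set.Ioc 0 (2 * π) := by
  have hdiff : T2 = Set.Icc (0 : Fin 2 → ℝ) (fun _ => 2 * π) \ {fun _ => 2 * π} := by
    ext x
    simp only [T2, Set.mem_Ico, Set.mem_sdiff, Set.mem_Icc, Set.mem_singleton_iff,
      lt_iff_le_and_ne]
    tauto
  rw [hdiff]
  exact (sdiff_null_ae_eq_self (measure_singleton _)).trans Measure.univ_pi_Ioc_ae_eq_Icc.symm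

lemma torusMeasure_two :
    torusMeasure 2 = ENNReal.ofReal ((2 * π) ^ 2)⁻¹ • volume.restrict T2 := by
  rw [torusMeasure, Measure.restrict_congr_set T2_ae_eq_cube]

lemma setIntegral_T2 {E : Type*} [NormedAddCommGroup E] [NormedSpace ℝ E] (f : (Fin 2 → ℝ) → E) :
    ∫ x in T2, f x = (2 * π) ^ 2 • ∫ x, f x ∂torusMeasure 2 := by
  rw [torusMeasure_two, integral_smul_measure, ENNReal.toReal_ofReal (by positivity),
    smul_inv_smul₀ (by positivity)]

/-! ### Lorentz spaces and their weak duals -/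

section Lorentz

open scoped NNReal

variable {α : Type*} [MeasurableSpace α]

/-- The Lorentz functional `∫₀^∞ μ{h > λ}^{1/p} dλ`, which for `h ≥ 0` is the `L^{p,1}` norm up to
normalisation. -/
def lorentzOne (p : ℝ) (μ : Measure α) (h : α → ℝ) : ℝ≥0∞ :=
  ∫⁻ l in Set.Ioi (0 : ℝ), μ {x | l < h x} ^ (1 / p)

/-- The weight `κ` has mass at most `K μ(E)^{1/p}` on each measurable set `E`: the form of the
bound in weak `L^{p'}` under which `κ` pairs with `L^{p,1}`. -/
def IsWeakWeight (p : ℝ) (μ : Measure α) (K : ℝ≥0∞) (κ : α → ℝ≥0∞) : Prop :=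
  ∀ E, MeasurableSet E → ∫⁻ x in E, κ x ∂μ ≤ K * μ E ^ (1 / p)

variable {p : ℝ} {μ : Measure α} {K : ℝ≥0∞} {κ : α → ℝ≥0∞} {h : α → ℝ}

lemma measurable_distribution_rpow (hp : 0 ≤ p) :
    Measurable fun l : ℝ => μ {x | l < h x} ^ (1 / p) :=
  Antitone.measurable fun _ _ hab => ENNReal.rpow_le_rpow
    (measure_mono fun _ hx => hab.trans_lt hx) (one_div_nonneg.2 hp)

theorem IsWeakWeight.lintegral_mul_le (hK : IsWeakWeight p μ K κ) (hp : 0 ≤ p)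
    (hκ : Measurable κ) (hh : Measurable h) (hh0 : 0 ≤ h) :
    ∫⁻ x, κ x * ENNReal.ofReal (h x) ∂μ ≤ K * lorentzOne p μ h := by
  have hcake : ∫⁻ x, κ x * ENNReal.ofReal (h x) ∂μ =
      ∫⁻ l in Set.Ioi (0 : ℝ), ∫⁻ x in {x | l < h x}, κ x ∂μ := by
    have hset : ∀ l : ℝ, MeasurableSet {x | l < h x} := fun l =>
      measurableSet_lt measurable_const hh
    simp only [← withDensity_apply κ (hset _)]
    rw [← lintegral_eq_lintegral_meas_lt _ (.of_forall hh0) hh.aemeasurable,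
      lintegral_withDensity_eq_lintegral_mul _ hκ hh.ennreal_ofReal]
    rfl
  rw [hcake, lorentzOne, ← lintegral_const_mul _ (measurable_distribution_rpow hp)]
  exact lintegral_mono fun l => hK _ (measurableSet_lt measurable_const hh)

lemma isWeakWeight_lorentzOne {q : ℝ} (hpq : p.HolderConjugate q) (hh : Measurable h)
    (hh0 : 0 ≤ h) : IsWeakWeight q μ (lorentzOne p μ h) fun x => ENNReal.ofReal (h x) := by
  intro E _
  rw [lintegral_eq_lintegral_meas_lt _ (.of_forall hh0) hh.aemeasurable, lorentzOne,
    ← lintegral_mul_const _ (measurable_distribution_rpow hpq.nonneg)]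
  refine lintegral_mono fun l => ?_
  rw [Measure.restrict_apply (measurableSet_lt measurable_const hh)]
  set A := {x | l < h x}
  calc μ (A ∩ E) = μ (A ∩ E) ^ (1 / p) * μ (A ∩ E) ^ (1 / q) := by
        rw [← ENNReal.rpow_add_of_nonneg _ _ hpq.one_div_nonneg hpq.symm.one_div_nonneg,
          hpq.one_div_add_one_div, one_div_one, ENNReal.rpow_one]
    _ ≤ μ A ^ (1 / p) * μ E ^ (1 / q) := by
        gcongr
        · exact hpq.one_div_nonneg
        · exact Set.inter_subset_left
        · exact hpq.symm.one_div_nonneg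
        · exact Set.inter_subset_right

lemma memLp_two_of_lorentzOne_abs_ne_top (hh : Measurable h)
    (hfin : lorentzOne 2 μ (fun x => |h x|) ≠ ⊤) : MemLp h 2 μ := by
  have hsq : ∫⁻ x, ENNReal.ofReal |h x| * ENNReal.ofReal |h x| ∂μ < ⊤ :=
    ((isWeakWeight_lorentzOne .two_two hh.abs fun _ => abs_nonneg _).lintegral_mul_le zero_le_two
      hh.abs.ennreal_ofReal hh.abs fun _ => abs_nonneg _).trans_lt
        (ENNReal.mul_lt_top hfin.lt_top hfin.lt_top)
  rw [memLp_two_iff_integrable_sq hh.aestronglyMeasurable]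
  refine ⟨(hh.pow_const 2).aestronglyMeasurable, ?_⟩
  rw [hasFiniteIntegral_iff_ofReal (.of_forall fun x => sq_nonneg _)]
  simpa only [← sq_abs (h _), sq, ENNReal.ofReal_mul (abs_nonneg _)] using hsq

lemma lorentzOne_le_of_lintegral_rpow_le (hp : 0 < p) (hh : Measurable h) {S B T : ℝ≥0}
    (hT : 0 < T) (hS : ∀ x, h x ≤ S) (hB : ∫⁻ x, ENNReal.ofReal (h x) ^ p ∂μ ≤ B ^ p) :
    lorentzOne p μ h ≤ T * μ Set.univ ^ (1 / p) + B / T * S := by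
  have hdecay : ∀ l : ℝ, ENNReal.ofReal l * μ {x | l < h x} ^ (1 / p) ≤ B := by
    intro l
    have hmarkov : ENNReal.ofReal l ^ p * μ {x | l < h x} ≤ B ^ p := by
      refine le_trans ?_ ((mul_meas_ge_le_lintegral (hh.ennreal_ofReal.pow_const p)
        (ENNReal.ofReal l ^ p)).trans hB)
      refine mul_le_mul_right (measure_mono fun x (hx : l < h x) => ?_) _
      exact ENNReal.rpow_le_rpow (ENNReal.ofReal_le_ofReal hx.le) hp.le
    have hroot := ENNReal.rpow_le_rpow hmarkov (one_div_pos.2 hp).le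
    rwa [ENNReal.mul_rpow_of_nonneg _ _ (one_div_pos.2 hp).le, ← ENNReal.rpow_mul,
      ← ENNReal.rpow_mul, mul_one_div_cancel hp.ne', ENNReal.rpow_one, ENNReal.rpow_one] at hroot
  have hpoint : ∀ l ∈ Set.Ioi (0 : ℝ), μ {x | l < h x} ^ (1 / p) ≤
      (Set.Ioc (0 : ℝ) T).indicator (fun _ => μ Set.univ ^ (1 / p)) l +
        (Set.Ioc (0 : ℝ) S).indicator (fun _ => (B / T : ℝ≥0∞)) l := by
    intro l hl
    rcases le_or_gt l T with hlT | hTl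
    · rw [Set.indicator_of_mem (show l ∈ Set.Ioc (0 : ℝ) T from ⟨hl, hlT⟩)]
      exact le_add_right (ENNReal.rpow_le_rpow (measure_mono (Set.subset_univ _))
        (one_div_pos.2 hp).le)
    rcases le_or_gt l S with hlS | hSl
    · rw [Set.indicator_of_mem (show l ∈ Set.Ioc (0 : ℝ) S from ⟨hl, hlS⟩)]
      refine le_add_left ((ENNReal.le_div_iff_mul_le (by simp [hT.ne']) (by simp)).2 ?_)
      rw [mul_comm]
      refine le_trans ?_ (hdecay l)
      gcongr
      exact ENNReal.ofReal_coe_nnreal ▸ ENNReal.ofReal_le_ofReal hTl.le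
    · have hempty : {x | l < h x} = ∅ :=
        Set.eq_empty_of_forall_notMem fun x hx => (hS x).not_gt (hSl.trans hx)
      simp [hempty, hp]
  refine (setLIntegral_mono' measurableSet_Ioi hpoint).trans
    ((setLIntegral_le_lintegral _ _).trans ?_)
  rw [lintegral_add_left (measurable_const.indicator measurableSet_Ioc),
    lintegral_indicator_const measurableSet_Ioc, lintegral_indicator_const measurableSet_Ioc]
  simp [mul_comm]

lemma tendsto_lorentzOne_indicator (hp : 0 < p) [IsFiniteMeasure μ] (hh : Measurable h)
    (hh0 : 0 ≤ h) (hfin : lorentzOne p μ h ≠ ⊤) :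
    Tendsto (fun M : ℕ => lorentzOne p μ ({x | (M : ℝ) < h x}.indicator h)) atTop (𝓝 0) := by
  rw [← lintegral_zero (μ := volume.restrict (Set.Ioi (0 : ℝ)))]
  refine tendsto_lintegral_of_dominated_convergence (fun l => μ {x | l < h x} ^ (1 / p))
    (fun M => measurable_distribution_rpow hp.le) (fun M => .of_forall fun l => ?_) hfin
    ((ae_restrict_iff' measurableSet_Ioi).2 <| .of_forall fun l (hl : 0 < l) => ?_)
  · exact ENNReal.rpow_le_rpow (measure_mono fun x hx => hx.trans_le
      (Set.indicator_le_self' (fun _ _ => hh0 x) x)) (one_div_pos.2 hp).le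
  · have hset : ∀ M : ℕ, {x | l < ({x | (M : ℝ) < h x}.indicator h) x} =
        {x | (M : ℝ) < h x ∧ l < h x} := fun M => by
      ext x
      by_cases hx : (M : ℝ) < h x <;> simp [hx, hl.le]
    have hanti : Antitone fun M : ℕ => {x | (M : ℝ) < h x ∧ l < h x} := fun M N hMN x hx =>
      ⟨(Nat.cast_le.2 hMN).trans_lt hx.1, hx.2⟩
    have hinter : ⋂ M : ℕ, {x | (M : ℝ) < h x ∧ l < h x} = ∅ :=
      Set.eq_empty_of_forall_notMem fun x hx => by
        obtain ⟨M, hM⟩ := exists_nat_gt (h x)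
        exact hM.not_gt (Set.mem_iInter.1 hx M).1
    have hlim : Tendsto (fun M : ℕ => μ {x | (M : ℝ) < h x ∧ l < h x}) atTop (𝓝 0) := by
      rw [← measure_empty (μ := μ), ← hinter]
      exact tendsto_measure_iInter_atTop (fun M => ((measurableSet_lt measurable_const hh).inter
        (measurableSet_lt measurable_const hh)).nullMeasurableSet) hanti ⟨0, measure_ne_top _ _⟩
    simp only [hset]
    rw [← ENNReal.zero_rpow_of_pos (one_div_pos.2 hp)]
    exact ((ENNReal.continuous_rpow_const (y := 1 / p)).tendsto 0).comp hlim

lemma IsWeakWeight.lintegral_mul_mul_le (hweak : IsWeakWeight p μ K κ) (hp : 0 < p)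
    (hκ : Measurable κ) {g P : α → ℝ} (hg : Measurable g) (hg0 : 0 ≤ g) (hP : Measurable P)
    (hP0 : 0 ≤ P) {S B T : ℝ≥0} (hT : 0 < T) (hPS : ∀ x, P x ≤ S)
    (hPB : ∫⁻ x, ENNReal.ofReal (P x) ^ p ∂μ ≤ B ^ p) (M : ℕ) :
    ∫⁻ x, κ x * ENNReal.ofReal (g x * P x) ∂μ ≤
      S * (K * lorentzOne p μ ({x | (M : ℝ) < g x}.indicator g)) +
        M * (K * (T * μ Set.univ ^ (1 / p) + B / T * S)) := by
  set gTail := {x | (M : ℝ) < g x}.indicator g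
  have hgTail : Measurable gTail := hg.indicator (measurableSet_lt measurable_const hg)
  have hgTail0 : 0 ≤ gTail := Set.indicator_nonneg fun x _ => hg0 x
  have hsplit : ∀ x, κ x * ENNReal.ofReal (g x * P x) ≤
      S * (κ x * ENNReal.ofReal (gTail x)) + M * (κ x * ENNReal.ofReal (P x)) := by
    intro x
    have hg_le : g x ≤ gTail x + M := by
      by_cases hx : (M : ℝ) < g x
      · simp [gTail, hx]
      · simpa [gTail, hx] using not_lt.1 hx
    have hprod : g x * P x ≤ gTail x * S + P x * M := by
      nlinarith [mul_le_mul_of_nonneg_right hg_le (hP0 x),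
        mul_le_mul_of_nonneg_left (hPS x) (hgTail0 x)]
    refine (mul_le_mul_right (ENNReal.ofReal_le_ofReal hprod) _).trans_eq ?_
    rw [ENNReal.ofReal_add (mul_nonneg (hgTail0 x) S.coe_nonneg) (mul_nonneg (hP0 x) M.cast_nonneg),
      ENNReal.ofReal_mul (hgTail0 x), ENNReal.ofReal_mul (hP0 x), ENNReal.ofReal_coe_nnreal,
      ENNReal.ofReal_natCast]
    ring
  have hmeas : ∀ {f : α → ℝ}, Measurable f → Measurable fun x => κ x * ENNReal.ofReal (f x) :=
    fun hf => hκ.mul hf.ennreal_ofReal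
  refine (lintegral_mono hsplit).trans ?_
  rw [lintegral_add_left ((hmeas hgTail).const_mul _), lintegral_const_mul _ (hmeas hgTail),
    lintegral_const_mul _ (hmeas hP)]
  gcongr
  · exact hweak.lintegral_mul_le hp.le hκ hgTail hgTail0
  · exact (hweak.lintegral_mul_le hp.le hκ hP hP0).trans
      (mul_le_mul_right (lorentzOne_le_of_lintegral_rpow_le hp hP hT hPS hPB) _)

theorem exists_lintegral_weakWeight_mul_mul_le (hp : 0 < p) [IsFiniteMeasure μ] {g : α → ℝ}
    (hg : Measurable g) (hg0 : 0 ≤ g) (hfin : lorentzOne p μ g ≠ ⊤) (K B : ℝ≥0) {c : ℝ≥0}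
    (hc : 0 < c) :
    ∃ D : ℝ≥0, ∀ (κ : α → ℝ≥0∞) (P : α → ℝ) (S : ℝ≥0), Measurable κ → Measurable P →
      IsWeakWeight p μ K κ → 0 ≤ P → (∀ x, P x ≤ S) →
      ∫⁻ x, ENNReal.ofReal (P x) ^ p ∂μ ≤ B ^ p →
      ∫⁻ x, κ x * ENNReal.ofReal (g x * P x) ∂μ ≤ D + c * S := by
  obtain ⟨ε, hε, hKε⟩ : ∃ ε : ℝ≥0, 0 < ε ∧ K * ε < c / 2 := exists_pos_mul_lt (half_pos hc) K
  obtain ⟨M, hM⟩ := ((tendsto_lorentzOne_indicator hp hg hg0 hfin).eventually_le_const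
    (ENNReal.coe_pos.2 hε)).exists
  obtain ⟨δ, hδ, hMδ⟩ : ∃ δ : ℝ≥0, 0 < δ ∧ M * K * B * δ < c / 2 :=
    exists_pos_mul_lt (half_pos hc) _
  obtain ⟨m, hm⟩ := WithTop.ne_top_iff_exists.1
    (ENNReal.rpow_ne_top_of_nonneg (one_div_pos.2 hp).le (measure_ne_top μ Set.univ))
  replace hm : μ Set.univ ^ (1 / p) = (m : ℝ≥0∞) := hm.symm
  refine ⟨M * (K * (δ⁻¹ * m)), fun κ P S hκ hP hweak hP0 hPS hPB => ?_⟩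
  calc ∫⁻ x, κ x * ENNReal.ofReal (g x * P x) ∂μ
    _ ≤ S * (K * ε) + M * (K * ((δ⁻¹ : ℝ≥0) * m + B / (δ⁻¹ : ℝ≥0) * S)) := by
        rw [← hm]
        refine (hweak.lintegral_mul_mul_le hp hκ hg hg0 hP hP0 (inv_pos.2 hδ) hPS hPB M).trans ?_
        gcongr
    _ = (M * (K * (δ⁻¹ * m)) + (K * ε + M * K * B * δ) * S : ℝ≥0) := by
        rw [← ENNReal.coe_div (inv_pos.2 hδ).ne', div_inv_eq_mul]
        push_cast
        ring
    _ ≤ _ := by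
        rw [← ENNReal.coe_mul c, ← ENNReal.coe_add, ENNReal.coe_le_coe]
        gcongr
        exact (add_le_add hKε.le hMδ.le).trans_eq (add_halves c)

lemma lintegral_Ioi_div_sq (A : ℝ) {a : ℝ} (ha : 0 < a) :
    ∫⁻ l in Set.Ioi a, ENNReal.ofReal ((A / l) ^ 2) = ENNReal.ofReal (A ^ 2 / a) := by
  have hpow : ∀ l ∈ Set.Ioi a, (A / l) ^ 2 = A ^ 2 * l ^ (-2 : ℝ) := fun l hl => by
    rw [div_pow, Real.rpow_neg (ha.trans hl).le, Real.rpow_two, div_eq_mul_inv]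
  have hint : IntegrableOn (fun l : ℝ => (A / l) ^ 2) (Set.Ioi a) :=
    (integrableOn_congr_fun hpow measurableSet_Ioi).2
      ((integrableOn_Ioi_rpow_of_lt (by norm_num) ha).const_mul _)
  rw [← ofReal_integral_eq_lintegral_ofReal hint (.of_forall fun l => sq_nonneg _),
    setIntegral_congr_fun measurableSet_Ioi hpow, integral_const_mul,
    integral_Ioi_rpow_of_lt (by norm_num) ha, show (-2 : ℝ) + 1 = -1 by norm_num,
    Real.rpow_neg_one, neg_div_neg_eq, div_one, div_eq_mul_inv]

lemma isWeakWeight_two_of_meas_lt_le [IsFiniteMeasure μ] (hh : Measurable h) (hh0 : 0 ≤ h)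
    {A : ℝ} (hA : 0 < A) (hweak : ∀ l, 0 < l → μ {x | l < h x} ≤ ENNReal.ofReal ((A / l) ^ 2)) :
    IsWeakWeight 2 μ (ENNReal.ofReal (2 * A)) fun x => ENNReal.ofReal (h x) := by
  intro E _
  rcases eq_or_ne (μ E) 0 with hE0 | hE0
  · simp [Measure.restrict_eq_zero.2 hE0]
  set m : ℝ := √(μ E).toReal
  have hm : 0 < m := Real.sqrt_pos.2 (ENNReal.toReal_pos hE0 (measure_ne_top μ E))
  have hmE : μ E = ENNReal.ofReal (m ^ 2) := by
    rw [Real.sq_sqrt ENNReal.toReal_nonneg, ENNReal.ofReal_toReal (measure_ne_top μ E)]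
  have hlow : ∫⁻ l in Set.Ioc 0 (A / m), μ.restrict E {x | l < h x} ≤ ENNReal.ofReal (A * m) := by
    calc _ ≤ ∫⁻ _ in Set.Ioc 0 (A / m), μ E :=
          lintegral_mono fun l => (measure_mono (Set.subset_univ _)).trans_eq (by simp)
      _ = ENNReal.ofReal (A * m) := by
          rw [setLIntegral_const, Real.volume_Ioc, hmE, ← ENNReal.ofReal_mul (by positivity)]
          congr 1
          field_simp
          ring
  have hhigh : ∫⁻ l in Set.Ioi (A / m), μ.restrict E {x | l < h x} ≤ ENNReal.ofReal (A * m) := by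
    have hAm : 0 < A / m := div_pos hA hm
    calc _ ≤ ∫⁻ l in Set.Ioi (A / m), ENNReal.ofReal ((A / l) ^ 2) :=
          setLIntegral_mono' measurableSet_Ioi fun l hl =>
            (Measure.restrict_apply_le _ _).trans (hweak l (hAm.trans hl))
      _ = ENNReal.ofReal (A * m) := by
          rw [lintegral_Ioi_div_sq A hAm]
          congr 1
          field_simp
  rw [lintegral_eq_lintegral_meas_lt _ (.of_forall hh0) hh.aemeasurable,
    ← Set.Ioc_union_Ioi_eq_Ioi (div_pos hA hm).le,
    lintegral_union measurableSet_Ioi (Set.Ioc_disjoint_Ioi le_rfl), hmE]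
  refine (add_le_add hlow hhigh).trans_eq ?_
  rw [ENNReal.ofReal_rpow_of_pos (by positivity), ← Real.sqrt_eq_rpow, Real.sqrt_sq hm.le,
    ← ENNReal.ofReal_mul (by positivity), ← ENNReal.ofReal_add (by positivity) (by positivity)]
  ring_nf

end Lorentz

section ChordBalls

lemma sq_le_four_mul_two_sub_two_cos {w : ℝ} (hw : |w| ≤ π) :
    w ^ 2 ≤ 4 * (2 - 2 * Real.cos w) := by
  have hcos := Real.cos_le_one_sub_mul_cos_sq hw
  have hpi : 1 / 8 ≤ 2 / π ^ 2 := by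
    rw [div_le_div_iff₀ (by norm_num) (by positivity)]
    nlinarith [Real.pi_pos, Real.pi_le_four]
  nlinarith [mul_le_mul_of_nonneg_right hpi (sq_nonneg w)]

lemma exists_sq_sub_le_of_abs_le_two_pi {z : ℝ} (hz : |z| ≤ 2 * π) :
    ∃ m ∈ ({-1, 0, 1} : Finset ℤ), (z - 2 * π * m) ^ 2 ≤ 4 * (2 - 2 * Real.cos z) := by
  obtain ⟨hz₁, hz₂⟩ := abs_le.1 hz
  have of_abs_le : ∀ m ∈ ({-1, 0, 1} : Finset ℤ), |z - 2 * π * m| ≤ π →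
      ∃ m ∈ ({-1, 0, 1} : Finset ℤ), (z - 2 * π * m) ^ 2 ≤ 4 * (2 - 2 * Real.cos z) := by
    refine fun m hm hle => ⟨m, hm, (sq_le_four_mul_two_sub_two_cos hle).trans_eq ?_⟩
    rw [mul_comm (2 * π), Real.cos_sub_int_mul_two_pi]
  rcases le_total z (-π) with hneg | hneg
  · exact of_abs_le (-1) (by simp) (abs_le.2 ⟨by push_cast; linarith, by push_cast; linarith⟩)
  rcases le_total z π with hpos | hpos
  · exact of_abs_le 0 (by simp) (abs_le.2 ⟨by push_cast; linarith, by push_cast; linarith⟩)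
  · exact of_abs_le 1 (by simp) (abs_le.2 ⟨by push_cast; linarith, by push_cast; linarith⟩)

variable {d : ℕ}

lemma chordDist_lt_inter_subset_biUnion_closedBall {x : Fin d → ℝ}
    (hx : ∀ i, x i ∈ Set.Icc 0 (2 * π)) {r : ℝ} (hr : 0 ≤ r) :
    {y | chordDist (x - y) < r} ∩ Set.univ.pi (fun _ => Set.Ioc 0 (2 * π)) ⊆
      ⋃ m ∈ Fintype.piFinset fun _ : Fin d => ({-1, 0, 1} : Finset ℤ),
        Metric.closedBall (fun i => x i - 2 * π * m i) (2 * r) := by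
  rintro y ⟨hyr, hy⟩
  have hz : ∀ i, |x i - y i| ≤ 2 * π := fun i => by
    have hyi := hy i (Set.mem_univ i)
    exact abs_le.2 ⟨by linarith [(hx i).1, hyi.2], by linarith [(hx i).2, hyi.1]⟩
  choose m hmM hm using fun i => exists_sq_sub_le_of_abs_le_two_pi (hz i)
  refine Set.mem_biUnion (Fintype.mem_piFinset.2 hmM) (Metric.mem_closedBall'.2 ?_)
  refine (dist_pi_le_iff (by positivity)).2 fun i => ?_
  have hcoord : 2 - 2 * Real.cos (x i - y i) ≤ r ^ 2 :=
    calc 2 - 2 * Real.cos (x i - y i) ≤ chordDist (x - y) ^ 2 := by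
          rw [chordDist_sq]
          exact single_le_sum (f := fun i => 2 - 2 * Real.cos ((x - y) i))
            (fun j _ => by linarith [Real.cos_le_one ((x - y) j)]) (mem_univ i)
      _ ≤ r ^ 2 := by gcongr; exacts [chordDist_nonneg _, le_of_lt hyr]
  rw [Real.dist_eq, sub_right_comm]
  exact abs_le_of_sq_le_sq (by nlinarith [hm i]) (by positivity)

lemma torusMeasure_chordDist_lt_le {x : Fin d → ℝ} (hx : ∀ i, x i ∈ Set.Icc 0 (2 * π)) {r : ℝ}
    (hr : 0 ≤ r) : torusMeasure d {y | chordDist (x - y) < r} ≤ ENNReal.ofReal ((2 * r) ^ d) := by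
  set M : Finset (Fin d → ℤ) := Fintype.piFinset fun _ => {-1, 0, 1}
  have hball : ∀ z : Fin d → ℝ, volume (Metric.closedBall z (2 * r)) = ENNReal.ofReal (4 * r) ^ d :=
    fun z => by
      rw [Real.volume_pi_closedBall _ (by positivity), ← ENNReal.ofReal_pow (by positivity),
        Fintype.card_fin]
      ring_nf
  have hcard : #M = 3 ^ d := by simp [M]
  have hvol : volume (⋃ m ∈ M, Metric.closedBall (fun i => x i - 2 * π * m i) (2 * r)) ≤
      ENNReal.ofReal ((12 * r) ^ d) := by
    refine (measure_biUnion_finset_le M _).trans_eq ?_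
    simp only [hball, sum_const, hcard, nsmul_eq_mul]
    rw [ENNReal.ofReal_pow (by positivity), show 12 * r = 3 * (4 * r) by ring,
      ENNReal.ofReal_mul zero_le_three, mul_pow]
    simp
  rw [torusMeasure, Measure.smul_apply, Measure.restrict_apply' (MeasurableSet.univ_pi fun _ =>
    measurableSet_Ioc), smul_eq_mul]
  have hcover := measure_mono (μ := volume) (chordDist_lt_inter_subset_biUnion_closedBall hx hr)
  refine (mul_le_mul_right (hcover.trans hvol) _).trans ?_
  rw [← ENNReal.ofReal_mul (by positivity), ← inv_pow, ← mul_pow]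
  gcongr ENNReal.ofReal (?_ ^ d)
  rw [inv_mul_le_iff₀ two_pi_pos]
  nlinarith [Real.pi_gt_three]

lemma isWeakWeight_of_chordDist_mul_le {x : Fin 2 → ℝ} (hx : ∀ i, x i ∈ Set.Icc 0 (2 * π)) {C : ℝ}
    (hC : 0 ≤ C) {k : (Fin 2 → ℝ) → ℝ} (hk : Measurable k) (hk0 : 0 ≤ k)
    (hbound : ∀ z, chordDist z * k z ≤ C) : IsWeakWeight 2 (torusMeasure 2)
    (ENNReal.ofReal (4 * (C + 1))) fun y => ENNReal.ofReal (k (x - y)) := by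
  have hA : 0 < 2 * (C + 1) := by positivity
  rw [show 4 * (C + 1) = 2 * (2 * (C + 1)) by ring]
  refine isWeakWeight_two_of_meas_lt_le (hk.comp (measurable_const.sub measurable_id))
    (fun y => hk0 (x - y)) hA fun l hl => ?_
  have hsub : {y | l < k (x - y)} ⊆ {y | chordDist (x - y) < (C + 1) / l} := by
    intro y (hy : l < k (x - y))
    refine (lt_div_iff₀ hl).2 ?_
    nlinarith [hbound (x - y), chordDist_nonneg (x - y)]
  refine (measure_mono hsub).trans ((torusMeasure_chordDist_lt_le hx (by positivity)).trans_eq ?_)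
  ring_nf

end ChordBalls

/-! ### Steady solutions in Fourier variables -/

section FourierForm

variable {d : ℕ}

/-- The Fourier coefficients of a component of a real vector field. -/
def vecCoeff (u : (Fin d → ℝ) → Fin d → ℝ) (i : Fin d) (k : Fin d → ℤ) : ℂ :=
  torusCoeff (fun x => (u x i : ℂ)) k

/-- The Fourier coefficients of the entries of `u ⊗ u`. -/
def tensorCoeff (u : (Fin d → ℝ) → Fin d → ℝ) (i j : Fin d) (k : Fin d → ℤ) : ℂ :=
  torusCoeff (fun x => ((u x i * u x j : ℝ) : ℂ)) k

lemma torusCoeff_ofReal {f : (Fin d → ℝ) → ℝ} (hf : Integrable f (torusMeasure d))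
    (k : Fin d → ℤ) : torusCoeff (fun x => (f x : ℂ)) k =
      (∫ x, f x * Real.cos (phase k x) ∂torusMeasure d : ℝ) -
        Complex.I * (∫ x, f x * Real.sin (phase k x) ∂torusMeasure d : ℝ) := by
  have hcos : Integrable (fun x => f x * Real.cos (phase k x)) (torusMeasure d) :=
    hf.mul_bdd (Real.continuous_cos.comp (continuous_phase k)).aestronglyMeasurable
      (.of_forall fun x => Real.abs_cos_le_one _)
  have hsin : Integrable (fun x => f x * Real.sin (phase k x)) (torusMeasure d) :=
    hf.mul_bdd (Real.continuous_sin.comp (continuous_phase k)).aestronglyMeasurable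
      (.of_forall fun x => Real.abs_sin_le_one _)
  rw [← integral_complex_ofReal, ← integral_complex_ofReal, ← integral_const_mul,
    ← integral_sub hcos.ofReal (hsin.ofReal.const_mul _), torusCoeff]
  congr with x
  have hphase : Complex.I * (phase (-k) x : ℂ) = (-phase k x : ℝ) * Complex.I := by
    simp [phase, mul_comm]
  rw [wave, hphase, Complex.exp_ofReal_mul_I]
  simp only [Real.cos_neg, Complex.ofReal_cos, Real.sin_neg, Complex.ofReal_neg,
    Complex.ofReal_sin, neg_mul, Complex.ofReal_mul]
  ring

lemma torusCoeff_ofReal_sum {ι : Type*} (s : Finset ι) {f : ι → (Fin d → ℝ) → ℝ}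
    (hf : ∀ i ∈ s, Integrable (f i) (torusMeasure d)) (c : ι → ℝ) (k : Fin d → ℤ) :
    torusCoeff (fun x => ((∑ i ∈ s, c i * f i x : ℝ) : ℂ)) k =
      ∑ i ∈ s, (c i : ℂ) * torusCoeff (fun x => (f i x : ℂ)) k := by
  have hint : ∀ i ∈ s, Integrable (fun x => (c i : ℂ) * ((f i x : ℂ) * wave (-k) x))
      (torusMeasure d) := fun i hi => (integrable_mul_wave (hf i hi).ofReal (-k)).const_mul _
  simp only [torusCoeff, Complex.ofReal_sum, Complex.ofReal_mul, sum_mul, mul_assoc]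
  rw [integral_finsetSum s hint]
  simp only [integral_const_mul]

lemma contDiff_sin_phase (k : Fin d → ℤ) (c s : ℝ) :
    ContDiff ℝ (⊤ : ℕ∞) fun x => c * Real.sin (phase k x + s) := by
  unfold phase
  fun_prop

lemma sin_phase_add_period (k : Fin d → ℤ) (s : ℝ) (x : Fin d → ℝ) (m : Fin d → ℤ) :
    Real.sin (phase k (x + fun i => 2 * π * (m i : ℝ)) + s) = Real.sin (phase k x + s) := by
  rw [phase_add_period, add_right_comm, Real.sin_add_int_mul_two_pi]

lemma pd_sin_phase (k : Fin d → ℤ) (c s : ℝ) (i : Fin d) (x : Fin d → ℝ) :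
    pd d i (fun y => c * Real.sin (phase k y + s)) x =
      c * k i * Real.cos (phase k x + s) := by
  have hphase : HasFDerivAt (phase k)
      (∑ i, (k i : ℝ) • ContinuousLinearMap.proj (R := ℝ) (φ := fun _ : Fin d => ℝ) i) x :=
    HasFDerivAt.fun_sum fun i _ => ((ContinuousLinearMap.proj (R := ℝ)
      (φ := fun _ : Fin d => ℝ) i).hasFDerivAt (x := x)).const_mul (k i : ℝ)
  rw [pd, (((hphase.add_const s).sin).const_mul c).fderiv]
  simp only [_root_.smul_apply, _root_.sum_apply, ContinuousLinearMap.proj_apply,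
    Pi.single_apply, smul_eq_mul, mul_ite, mul_one, mul_zero, sum_ite_eq', mem_univ, if_true]
  ring

lemma lap_sin_phase (k : Fin d → ℤ) (c s : ℝ) (x : Fin d → ℝ) :
    lap d (fun y => c * Real.sin (phase k y + s)) x =
      -freqNormSq k * (c * Real.sin (phase k x + s)) := by
  have hpd : ∀ i, pd d i (fun y => c * Real.sin (phase k y + s)) =
      fun y => c * k i * Real.sin (phase k y + (s + π / 2)) := fun i => by
    ext y
    rw [pd_sin_phase, ← add_assoc, Real.sin_add_pi_div_two]
  simp only [lap, hpd, pd_sin_phase]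
  simp only [← add_assoc, Real.cos_add_pi_div_two, freqNormSq, neg_mul, sum_mul,
    ← sum_neg_distrib]
  exact sum_congr rfl fun i _ => by ring

variable {u : (Fin d → ℝ) → Fin d → ℝ}

lemma memLp_two_component (hu : Measurable u)
    (hL : ∀ i, lorentzOne 2 (torusMeasure d) (fun x => |u x i|) ≠ ⊤) (i : Fin d) :
    MemLp (fun x => u x i) 2 (torusMeasure d) :=
  memLp_two_of_lorentzOne_abs_ne_top ((measurable_pi_apply i).comp hu) (hL i)

lemma vecCoeff_zero_eq_zero (hu : ∀ i, Integrable (fun x => u x i) (torusMeasure d))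
    (hmean : ∫ x, u x ∂torusMeasure d = 0) (i : Fin d) : vecCoeff u i 0 = 0 := by
  have hi : ∫ x, u x i ∂torusMeasure d = 0 := by
    rw [← eval_integral hu, hmean, Pi.zero_apply]
  simp [vecCoeff, torusCoeff, wave, phase, integral_complex_ofReal, hi]

theorem sum_mul_vecCoeff_eq_zero (hu : ∀ i, Integrable (fun x => u x i) (torusMeasure d))
    (hdiv : ∀ ψ : (Fin d → ℝ) → ℝ, ContDiff ℝ (⊤ : ℕ∞) ψ → PerF d ψ →
      ∫ x, (∑ i, u x i * pd d i ψ x) ∂torusMeasure d = 0) (k : Fin d → ℤ) :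
    ∑ i, (k i : ℂ) * vecCoeff u i k = 0 := by
  have hwave : ∀ s, ∫ x, (∑ i, k i * u x i) * Real.cos (phase k x + s) ∂torusMeasure d = 0 := by
    intro s
    have htest := hdiv _ (contDiff_sin_phase k 1 s) fun x m => by rw [sin_phase_add_period]
    simp only [pd_sin_phase] at htest
    simpa only [one_mul, sum_mul, mul_left_comm, mul_assoc] using htest
  have hint : Integrable (fun x => ∑ i, k i * u x i) (torusMeasure d) :=
    integrable_finsetSum _ fun i _ => (hu i).const_mul _
  have hcos := hwave 0
  have hsin := hwave (π / 2)
  simp only [add_zero, Real.cos_add_pi_div_two, mul_neg, integral_neg, neg_eq_zero] at hcos hsin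
  have hcoeff := torusCoeff_ofReal hint k
  rw [hcos, hsin, torusCoeff_ofReal_sum _ fun i _ => hu i] at hcoeff
  simpa [vecCoeff] using hcoeff

/-- The weak steady Navier–Stokes equation for `u`, without the divergence constraint, with
integrals against the normalised measure `torusMeasure d`. -/
def IsWeakSteady (u : (Fin d → ℝ) → (Fin d → ℝ)) : Prop :=
  ∀ φ : (Fin d → ℝ) → (Fin d → ℝ), ContDiff ℝ (⊤ : ℕ∞) φ → PerF d φ → (∀ x, divg d φ x = 0) →
    (∫ x, (∑ j, u x j * lap d (fun y => φ y j) x) ∂torusMeasure d)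
      + ∑ i, ∑ j, ∫ x, u x i * u x j * pd d i (fun y => φ y j) x ∂torusMeasure d = 0

lemma IsWeakSteady.integral_trig_eq_zero (hNS : IsWeakSteady u)
    (huu : ∀ i j, Integrable (fun x => u x i * u x j) (torusMeasure d))
    {k : Fin d → ℤ} {p : Fin d → ℝ} (hp : ∑ i, p i * k i = 0) (s : ℝ) :
    -freqNormSq k * ∫ x, (∑ j, p j * u x j) * Real.sin (phase k x + s) ∂torusMeasure d +
      ∫ x, (∑ q : Fin d × Fin d, k q.1 * p q.2 * (u x q.1 * u x q.2)) *
        Real.cos (phase k x + s) ∂torusMeasure d = 0 := by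
  have htest := hNS (fun x j => p j * Real.sin (phase k x + s))
    (contDiff_pi.2 fun j => contDiff_sin_phase k (p j) s)
    (fun x m => by simp only [sin_phase_add_period])
    (fun x => by simp only [divg, pd_sin_phase, ← sum_mul, hp, zero_mul])
  simp only [lap_sin_phase, pd_sin_phase] at htest
  have hint : ∀ q ∈ (univ : Finset (Fin d × Fin d)), Integrable (fun x =>
      k q.1 * p q.2 * (u x q.1 * u x q.2) * Real.cos (phase k x + s)) (torusMeasure d) :=
    fun q _ => ((huu q.1 q.2).const_mul _).mul_bdd
      (Real.continuous_cos.comp ((continuous_phase k).add_const s)).aestronglyMeasurable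
      (.of_forall fun x => Real.abs_cos_le_one _)
  rw [← htest, ← integral_const_mul]
  simp only [sum_mul]
  rw [integral_finsetSum _ hint, Fintype.sum_prod_type]
  congr 1
  · simp only [mul_sum]
    exact integral_congr_ae (.of_forall fun x => sum_congr rfl fun j _ => by ring)
  · exact sum_congr rfl fun i _ => sum_congr rfl fun j _ =>
      integral_congr_ae (.of_forall fun x => by ring)

theorem IsWeakSteady.freqNormSq_mul_sum_vecCoeff_add (hNS : IsWeakSteady u)
    (hu : ∀ i, Integrable (fun x => u x i) (torusMeasure d))
    (huu : ∀ i j, Integrable (fun x => u x i * u x j) (torusMeasure d))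
    {k : Fin d → ℤ} {p : Fin d → ℝ} (hp : ∑ i, p i * k i = 0) :
    freqNormSq k * ∑ j, (p j : ℂ) * vecCoeff u j k +
      Complex.I * ∑ i, ∑ j, (k i * p j : ℂ) * tensorCoeff u i j k = 0 := by
  have hF : Integrable (fun x => ∑ j, p j * u x j) (torusMeasure d) :=
    integrable_finsetSum _ fun j _ => (hu j).const_mul _
  have hG : Integrable (fun x => ∑ q : Fin d × Fin d, k q.1 * p q.2 * (u x q.1 * u x q.2))
      (torusMeasure d) := integrable_finsetSum _ fun q _ => (huu q.1 q.2).const_mul _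
  have hwave := hNS.integral_trig_eq_zero huu hp
  have hcos := hwave 0
  have hsin := hwave (π / 2)
  simp only [add_zero, Real.cos_add_pi_div_two, Real.sin_add_pi_div_two, mul_neg,
    integral_neg] at hcos hsin
  have hcoeffF : ∑ j, (p j : ℂ) * vecCoeff u j k =
      torusCoeff (fun x => ((∑ j, p j * u x j : ℝ) : ℂ)) k :=
    (torusCoeff_ofReal_sum _ (fun j _ => hu j) p k).symm
  have hcoeffG : ∑ i, ∑ j, (k i * p j : ℂ) * tensorCoeff u i j k = torusCoeff
      (fun x => ((∑ q : Fin d × Fin d, k q.1 * p q.2 * (u x q.1 * u x q.2) : ℝ) : ℂ)) k := by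
    rw [torusCoeff_ofReal_sum _ fun q _ => huu q.1 q.2, Fintype.sum_prod_type]
    simp [tensorCoeff]
  rw [hcoeffF, hcoeffG, torusCoeff_ofReal hF, torusCoeff_ofReal hG]
  have hcos' := congrArg Complex.ofReal hcos
  have hsin' := congrArg Complex.ofReal hsin
  rw [Complex.ofReal_add, Complex.ofReal_mul, Complex.ofReal_zero, Complex.ofReal_neg]
    at hcos' hsin'
  rw [Complex.ofReal_neg] at hsin'
  linear_combination Complex.I * hcos' - hsin' -
    (∫ x, (∑ q : Fin d × Fin d, k q.1 * p q.2 * (u x q.1 * u x q.2)) *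
      Real.sin (phase k x) ∂torusMeasure d : ℝ) * Complex.I_sq

end FourierForm

section FundamentalDomain

variable {u : (Fin 2 → ℝ) → (Fin 2 → ℝ)}

lemma abs_le_enorm2 (v : Fin 2 → ℝ) (i : Fin 2) : |v i| ≤ enorm2 v := by
  refine Real.abs_le_sqrt ?_
  fin_cases i <;> simp [sq_nonneg]

lemma lorentzOne_abs_ne_top_of_L21 (hu : Measurable u) (hL : L21 u < ⊤) (i : Fin 2) :
    lorentzOne 2 (torusMeasure 2) (fun x => |u x i|) ≠ ⊤ := by
  set C := ENNReal.ofReal ((2 * π) ^ 2)⁻¹ with hC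
  refine ne_top_of_le_ne_top (ENNReal.mul_ne_top
    (ENNReal.rpow_ne_top_of_nonneg one_half_pos.le (hC ▸ ENNReal.ofReal_ne_top)) hL.ne)
    (le_trans (lintegral_mono fun l => ?_) (lintegral_const_mul' (C ^ (1 / 2 : ℝ)) _
      (ENNReal.rpow_ne_top_of_nonneg one_half_pos.le (hC ▸ ENNReal.ofReal_ne_top))).le)
  have hset : MeasurableSet {x | l < |u x i|} :=
    measurableSet_lt measurable_const ((measurable_pi_apply i).comp hu).abs
  rw [← ENNReal.mul_rpow_of_nonneg _ _ one_half_pos.le, torusMeasure_two, Measure.smul_apply,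
    smul_eq_mul, Measure.restrict_apply hset]
  gcongr
  exact fun x hx => ⟨hx.2, hx.1.trans_le (abs_le_enorm2 _ _)⟩

lemma integral_torusMeasure_eq_zero {E : Type*} [NormedAddCommGroup E] [NormedSpace ℝ E]
    {f : (Fin 2 → ℝ) → E} (hf : ∫ x in T2, f x = 0) : ∫ x, f x ∂torusMeasure 2 = 0 := by
  rw [setIntegral_T2] at hf
  exact (smul_eq_zero.1 hf).resolve_left (by positivity)

lemma ae_restrict_T2_iff {p : (Fin 2 → ℝ) → Prop} :
    (∀ᵐ x ∂volume.restrict T2, p x) ↔ ∀ᵐ x ∂torusMeasure 2, p x := by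
  rw [torusMeasure_two, Measure.ae_ennreal_smul_measure_eq]
  exact (ENNReal.ofReal_pos.2 (by positivity)).ne'

end FundamentalDomain

/-! ### The mollified dual problem and its Galerkin approximation -/

section SkewPerturbation

open scoped Matrix

variable {ι : Type*} [Fintype ι]

lemma re_star_dotProduct_mulVec_of_skew {A : Matrix ι ι ℂ} (hA : Aᴴ = -A) (c : ι → ℂ) :
    (star c ⬝ᵥ A *ᵥ c).re = 0 := by
  have hconj : star (star c ⬝ᵥ A *ᵥ c) = -(star c ⬝ᵥ A *ᵥ c) := by
    rw [← Matrix.star_dotProduct_star, star_star, dotProduct_comm, Matrix.star_mulVec, hA,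
      Matrix.vecMul_neg, dotProduct_neg, dotProduct_comm, Matrix.dotProduct_mulVec]
  have hre := congrArg Complex.re hconj
  simp only [RCLike.star_def, Complex.conj_re, Complex.neg_re] at hre
  linarith

variable [DecidableEq ι]

lemma re_star_dotProduct_diagonal_sub_mulVec {A : Matrix ι ι ℂ} (hA : Aᴴ = -A) (w : ι → ℝ)
    (c : ι → ℂ) :
    (star c ⬝ᵥ (Matrix.diagonal (fun k => (w k : ℂ)) - A) *ᵥ c).re = ∑ k, w k * ‖c k‖ ^ 2 := by
  rw [Matrix.sub_mulVec, dotProduct_sub, Complex.sub_re, re_star_dotProduct_mulVec_of_skew hA,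
    sub_zero, dotProduct, Complex.re_sum]
  refine sum_congr rfl fun k _ => ?_
  rw [Matrix.mulVec_diagonal, Pi.star_apply, RCLike.star_def, mul_left_comm, Complex.conj_mul']
  norm_cast

lemma exists_diagonal_sub_mulVec_eq {A : Matrix ι ι ℂ} (hA : Aᴴ = -A) {w : ι → ℝ}
    (hw : ∀ k, 0 < w k) (b : ι → ℂ) :
    ∃ c, (Matrix.diagonal (fun k => (w k : ℂ)) - A) *ᵥ c = b := by
  refine Matrix.mulVec_surjective_iff_isUnit.2 (Matrix.mulVec_injective_iff_isUnit.1 ?_) b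
  refine (injective_iff_map_eq_zero (Matrix.mulVecLin _)).2 fun c hc => funext fun k => ?_
  have henergy := re_star_dotProduct_diagonal_sub_mulVec hA w c
  rw [Matrix.mulVecLin_apply] at hc
  rw [hc, dotProduct_zero, Complex.zero_re, eq_comm,
    sum_eq_zero_iff_of_nonneg fun k _ => mul_nonneg (hw k).le (sq_nonneg _)] at henergy
  simpa [(hw k).ne'] using henergy k (mem_univ k)

lemma exists_diagonal_sub_mulVec_eq_single {A : Matrix ι ι ℂ} (hA : Aᴴ = -A) {w : ι → ℝ}
    (hw : ∀ k, 1 ≤ w k) (k₀ : ι) :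
    ∃ c, (Matrix.diagonal (fun k => (w k : ℂ)) - A) *ᵥ c = Pi.single k₀ 1 ∧
      ∑ k, w k * ‖c k‖ ^ 2 ≤ 1 := by
  obtain ⟨c, hc⟩ := exists_diagonal_sub_mulVec_eq hA (fun k => one_pos.trans_le (hw k))
    (Pi.single k₀ 1)
  refine ⟨c, hc, ?_⟩
  have henergy := re_star_dotProduct_diagonal_sub_mulVec hA w c
  rw [hc, dotProduct_single_one, Pi.star_apply, RCLike.star_def, Complex.conj_re] at henergy
  have hsq : ‖c k₀‖ ^ 2 ≤ ∑ k, w k * ‖c k‖ ^ 2 :=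
    (le_mul_of_one_le_left (sq_nonneg _) (hw k₀)).trans
      (single_le_sum (f := fun k => w k * ‖c k‖ ^ 2)
        (fun k _ => mul_nonneg (one_pos.trans_le (hw k)).le (sq_nonneg _)) (mem_univ k₀))
  have hre := Complex.re_le_norm (c k₀)
  nlinarith

end SkewPerturbation

section Galerkin

open scoped Matrix

variable {d : ℕ}

/-- The symbol of a smoothing operator at frequency scale `√N`, normalised so that its square is
the heat multiplier `exp (-|k|² / N)`. -/
def mollifier (N : ℕ) (k : Fin d → ℤ) : ℝ := Real.exp (-freqNormSq k / (2 * N))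

lemma mollifier_pos (N : ℕ) (k : Fin d → ℤ) : 0 < mollifier N k := Real.exp_pos _

lemma mollifier_le_one (N : ℕ) (k : Fin d → ℤ) : mollifier N k ≤ 1 := by
  have := freqNormSq_nonneg k
  exact Real.exp_le_one_iff.2 (div_nonpos_of_nonpos_of_nonneg (by linarith) (by positivity))

lemma mollifier_neg (N : ℕ) (k : Fin d → ℤ) : mollifier N (-k) = mollifier N k := by
  rw [mollifier, freqNormSq_neg, mollifier]

lemma mollifier_sq (N : ℕ) (k : Fin d → ℤ) :
    mollifier N k ^ 2 = Real.exp (-freqNormSq k / N) := by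
  rw [mollifier, ← Real.exp_nat_mul, mul_comm 2 (N : ℝ), ← div_div]
  congr 1
  push_cast
  ring

lemma tendsto_mollifier (k : Fin d → ℤ) :
    Tendsto (fun N => mollifier N k) atTop (𝓝 1) := by
  rw [← Real.exp_zero]
  refine (Real.continuous_exp.tendsto 0).comp (Tendsto.const_div_atTop ?_ _)
  exact tendsto_natCast_atTop_atTop.const_mul_atTop two_pos

/-- The nonzero frequencies at truncation level `N`. -/
def galerkinFreqs (d N : ℕ) : Finset (Fin d → ℤ) := (freqBox d N).erase 0

lemma ne_zero_of_mem_galerkinFreqs {N : ℕ} {k : Fin d → ℤ} (hk : k ∈ galerkinFreqs d N) :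
    k ≠ 0 := ne_of_mem_erase hk

lemma one_le_freqNormSq_sq {k : Fin d → ℤ} (hk : k ≠ 0) : 1 ≤ freqNormSq k ^ 2 :=
  one_le_pow₀ (one_le_freqNormSq hk)

/-- The mollified Hessian, up to sign, of the trigonometric polynomial with coefficients `c`. -/
def mollHessian (N : ℕ) (c : (Fin d → ℤ) → ℂ) (a b : Fin d) : (Fin d → ℝ) → ℂ :=
  trigSum (galerkinFreqs d N) fun l => ((l a * l b * mollifier N l : ℝ) : ℂ) * c l

/-- `c` gives the coefficients of a Galerkin approximation, at truncation level `N`, of the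
solution `ψ` of `Δ²ψ + J div ((u · ∇) ∇Jψ) = exp (i k₀ · x)`, where `J` is the mollifier, together
with the energy bound that skew-symmetry of the advection term yields. -/
structure IsGalerkinSolution (u : (Fin d → ℝ) → Fin d → ℝ) (N : ℕ) (k₀ : Fin d → ℤ)
    (c : (Fin d → ℤ) → ℂ) : Prop where
  mem_freqs : k₀ ∈ galerkinFreqs d N
  equation : ∀ k ∈ galerkinFreqs d N, (freqNormSq k ^ 2 : ℂ) * c k - Complex.I * mollifier N k *
    ∑ i, ∑ q, k q * torusCoeff (fun x => (u x i : ℂ) * mollHessian N c i q x) k =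
      if k = k₀ then 1 else 0
  energy_le_one : ∑ k ∈ galerkinFreqs d N, freqNormSq k ^ 2 * ‖c k‖ ^ 2 ≤ 1

/-- The matrix, in Fourier variables, of the mollified advection term of the dual problem. -/
def advectionMatrix (u : (Fin d → ℝ) → Fin d → ℝ) (N : ℕ) : Matrix (Fin d → ℤ) (Fin d → ℤ) ℂ :=
  Matrix.of fun k l => Complex.I * mollifier N k * mollifier N l * (∑ q, (k q : ℂ) * l q) *
    ∑ i, (l i : ℂ) * vecCoeff u i (k - l)

lemma advectionMatrix_apply (u : (Fin d → ℝ) → Fin d → ℝ) (N : ℕ) (k l : Fin d → ℤ) :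
    advectionMatrix u N k l = Complex.I * mollifier N k * mollifier N l *
      (∑ q, (k q : ℂ) * l q) * ∑ i, (l i : ℂ) * vecCoeff u i (k - l) := rfl

variable {u : (Fin d → ℝ) → Fin d → ℝ}

lemma vecCoeff_conj (u : (Fin d → ℝ) → Fin d → ℝ) (i : Fin d) (k : Fin d → ℤ) :
    star (vecCoeff u i k) = vecCoeff u i (-k) := by
  rw [vecCoeff, vecCoeff, RCLike.star_def]
  simpa using (torusCoeff_conj (fun x => (u x i : ℂ)) (-k)).symm

lemma advectionMatrix_conjTranspose
    (hdiv : ∀ k : Fin d → ℤ, ∑ i, (k i : ℂ) * vecCoeff u i k = 0) (N : ℕ) :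
    (advectionMatrix u N)ᴴ = -advectionMatrix u N := by
  ext k l
  have hshift : ∑ i, (k i : ℂ) * vecCoeff u i (k - l) = ∑ i, (l i : ℂ) * vecCoeff u i (k - l) := by
    rw [← sub_eq_zero, ← sum_sub_distrib, ← hdiv (k - l)]
    simp [sub_mul]
  have hconj : star (∑ i, (k i : ℂ) * vecCoeff u i (l - k)) =
      ∑ i, (l i : ℂ) * vecCoeff u i (k - l) := by
    rw [← hshift, star_sum]
    simp [vecCoeff_conj]
  rw [Matrix.conjTranspose_apply, advectionMatrix_apply, star_mul', hconj]
  simp only [Matrix.neg_apply, advectionMatrix_apply, star_mul', star_sum, RCLike.star_def,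
    Complex.conj_I, Complex.conj_ofReal, map_intCast, mul_comm (k _ : ℂ)]
  ring

lemma torusCoeff_mul_mollHessian {i : Fin d} (hu : Integrable (fun x => u x i) (torusMeasure d))
    (N : ℕ) (c : (Fin d → ℤ) → ℂ) (a b : Fin d) (k : Fin d → ℤ) :
    torusCoeff (fun x => (u x i : ℂ) * mollHessian N c a b x) k =
      ∑ l ∈ galerkinFreqs d N,
        ((l a * l b * mollifier N l : ℝ) : ℂ) * c l * vecCoeff u i (k - l) :=
  torusCoeff_mul_trigSum hu.ofReal _ _ k

lemma sum_mul_torusCoeff_mul_mollHessian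
    (hu : ∀ i, Integrable (fun x => u x i) (torusMeasure d)) (N : ℕ) (c : (Fin d → ℤ) → ℂ)
    (k : Fin d → ℤ) :
    Complex.I * mollifier N k *
        ∑ i, ∑ q, k q * torusCoeff (fun x => (u x i : ℂ) * mollHessian N c i q x) k =
      ∑ l ∈ galerkinFreqs d N, advectionMatrix u N k l * c l := by
  simp_rw [torusCoeff_mul_mollHessian (hu _), mul_sum, advectionMatrix_apply]
  rw [sum_congr rfl fun i _ => sum_comm, sum_comm]
  refine sum_congr rfl fun l _ => ?_
  simp only [mul_sum, sum_mul, Complex.ofReal_mul, Complex.ofReal_intCast]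
  refine sum_congr rfl fun i _ => sum_congr rfl fun q _ => ?_
  ring

theorem exists_isGalerkinSolution (hu : ∀ i, Integrable (fun x => u x i) (torusMeasure d))
    (hdiv : ∀ k : Fin d → ℤ, ∑ i, (k i : ℂ) * vecCoeff u i k = 0) {N : ℕ} {k₀ : Fin d → ℤ}
    (hk₀ : k₀ ∈ galerkinFreqs d N) : ∃ c, IsGalerkinSolution u N k₀ c := by
  let A : Matrix (galerkinFreqs d N) (galerkinFreqs d N) ℂ :=
    (advectionMatrix u N).submatrix Subtype.val Subtype.val
  have hskew : Aᴴ = -A := by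
    rw [Matrix.conjTranspose_submatrix, advectionMatrix_conjTranspose hdiv, Matrix.submatrix_neg]
    rfl
  obtain ⟨c, hc, henergy⟩ := exists_diagonal_sub_mulVec_eq_single hskew
    (w := fun k => freqNormSq k.1 ^ 2)
    (fun k => one_le_freqNormSq_sq (ne_zero_of_mem_galerkinFreqs k.2)) ⟨k₀, hk₀⟩
  have hext (k : galerkinFreqs d N) : Function.extend Subtype.val c 0 k.1 = c k :=
    Subtype.val_injective.extend_apply c 0 k
  refine ⟨Function.extend Subtype.val c 0, hk₀, fun k hk => ?_, ?_⟩
  · have hrow := congrFun hc ⟨k, hk⟩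
    rw [Matrix.sub_mulVec, Pi.sub_apply, Matrix.mulVec_diagonal, Pi.single_apply] at hrow
    rw [sum_mul_torusCoeff_mul_mollHessian hu, ← sum_coe_sort, hext ⟨k, hk⟩]
    simpa [hext, Matrix.mulVec, dotProduct, A] using hrow
  · rw [← sum_coe_sort]
    simpa only [hext] using henergy

end Galerkin

/-! ### Uniform bounds on the Galerkin approximations -/

section HessianFormula

variable {d : ℕ} {u : (Fin d → ℝ) → Fin d → ℝ} {N : ℕ} {k₀ : Fin d → ℤ} {c : (Fin d → ℤ) → ℂ}

lemma freqMonomial_add (m n : Fin d → ℕ) (k : Fin d → ℤ) :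
    freqMonomial (m + n) k = freqMonomial m k * freqMonomial n k := by
  simp only [freqMonomial, Pi.add_apply, pow_add, prod_mul_distrib]

lemma freqMonomial_single_one (i : Fin d) (k : Fin d → ℤ) :
    freqMonomial (Pi.single i 1) k = k i := by
  rw [freqMonomial, prod_eq_single i (fun j _ hj => by simp [hj]) (by simp)]
  simp

lemma abs_mul_le_freqNormSq (k : Fin d → ℤ) (a b : Fin d) :
    |(k a * k b : ℝ)| ≤ freqNormSq k := by
  have hsq (i : Fin d) : (k i : ℝ) ^ 2 ≤ freqNormSq k :=
    single_le_sum (f := fun i => (k i : ℝ) ^ 2) (fun i _ => sq_nonneg _) (mem_univ i)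
  rw [abs_mul]
  nlinarith [two_mul_le_add_sq |(k a : ℝ)| |(k b : ℝ)|, sq_abs (k a : ℝ), sq_abs (k b : ℝ),
    hsq a, hsq b]

lemma norm_mollHessian_symbol_le (N : ℕ) (k : Fin d → ℤ) (a b : Fin d) :
    ‖((k a * k b * mollifier N k : ℝ) : ℂ)‖ ≤ freqNormSq k := by
  rw [Complex.norm_real, Real.norm_eq_abs, abs_mul, abs_of_pos (mollifier_pos N k)]
  exact (mul_le_of_le_one_right (abs_nonneg _) (mollifier_le_one N k)).trans
    (abs_mul_le_freqNormSq k a b)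

lemma continuous_mollHessian (N : ℕ) (c : (Fin d → ℤ) → ℂ) (a b : Fin d) :
    Continuous (mollHessian N c a b) := continuous_trigSum _ _

/-- The index of the third derivative `∂ₐ ∂_b ∂_q`. -/
def thirdDerivIndex (a b q : Fin d) : Fin d → ℕ := Pi.single a 1 + Pi.single b 1 + Pi.single q 1

lemma sum_thirdDerivIndex (a b q : Fin d) : ∑ i, thirdDerivIndex a b q i = 3 := by
  simp [thirdDerivIndex, sum_add_distrib]

lemma freqMonomial_thirdDerivIndex (a b q : Fin d) (k : Fin d → ℤ) :
    freqMonomial (thirdDerivIndex a b q) k = k a * k b * k q := by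
  simp only [thirdDerivIndex, freqMonomial_add, freqMonomial_single_one]

namespace IsGalerkinSolution

lemma hessian_coeff (hc : IsGalerkinSolution u N k₀ c) (a b : Fin d) {k : Fin d → ℤ}
    (hk : k ∈ galerkinFreqs d N) :
    ((k a * k b * mollifier N k : ℝ) : ℂ) * c k =
      ((k a * k b * mollifier N k / freqNormSq k ^ 2 : ℝ) : ℂ) * (if k = k₀ then 1 else 0) +
        Complex.I * ∑ i, ∑ q, ((freqMonomial (thirdDerivIndex a b q) k *
          Real.exp (-freqNormSq k / N) / freqNormSq k ^ 2 : ℝ) : ℂ) *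
            torusCoeff (fun x => (u x i : ℂ) * mollHessian N c i q x) k := by
  have hnorm : (freqNormSq k : ℂ) ≠ 0 :=
    Complex.ofReal_ne_zero.2 (freqNormSq_pos (ne_zero_of_mem_galerkinFreqs hk)).ne'
  have hsum : ∑ i, ∑ q, ((freqMonomial (thirdDerivIndex a b q) k *
      Real.exp (-freqNormSq k / N) / freqNormSq k ^ 2 : ℝ) : ℂ) *
        torusCoeff (fun x => (u x i : ℂ) * mollHessian N c i q x) k =
      ((k a * k b * mollifier N k ^ 2 / freqNormSq k ^ 2 : ℝ) : ℂ) *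
        ∑ i, ∑ q, k q * torusCoeff (fun x => (u x i : ℂ) * mollHessian N c i q x) k := by
    simp only [mul_sum, freqMonomial_thirdDerivIndex, ← mollifier_sq]
    refine sum_congr rfl fun i _ => sum_congr rfl fun q _ => ?_
    push_cast
    ring
  rw [hsum, ← hc.equation k hk]
  push_cast
  field_simp
  ring

lemma mollHessian_eq (hc : IsGalerkinSolution u N k₀ c)
    (hu : ∀ i, Integrable (fun x => u x i) (torusMeasure d)) (a b : Fin d) (x : Fin d → ℝ) :
    mollHessian N c a b x =
      ((k₀ a * k₀ b * mollifier N k₀ / freqNormSq k₀ ^ 2 : ℝ) : ℂ) * wave k₀ x +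
        Complex.I * ∑ i, ∑ q, ∫ y, biharmonicKernel (thirdDerivIndex a b q) N (x - y) *
          (u y i * mollHessian N c i q y) ∂torusMeasure d := by
  have hint (i q) : Integrable (fun y => (u y i : ℂ) * mollHessian N c i q y) (torusMeasure d) :=
    (hu i).ofReal.mul_bdd (continuous_mollHessian N c i q).aestronglyMeasurable
      (.of_forall (norm_trigSum_le _ _))
  have hkernel (i q) : ∫ y, biharmonicKernel (thirdDerivIndex a b q) N (x - y) *
      (u y i * mollHessian N c i q y) ∂torusMeasure d =
      ∑ k ∈ galerkinFreqs d N, ((freqMonomial (thirdDerivIndex a b q) k *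
        Real.exp (-freqNormSq k / N) / freqNormSq k ^ 2 : ℝ) : ℂ) *
          torusCoeff (fun x => (u x i : ℂ) * mollHessian N c i q x) k * wave k x := by
    rw [biharmonicKernel, integral_trigSum_sub_mul (hint i q), trigSum, galerkinFreqs, sum_erase]
    · rfl
    · simp [freqMonomial_zero (m := thirdDerivIndex a b q) (by simp [sum_thirdDerivIndex])]
  simp_rw [hkernel]
  rw [mollHessian, trigSum, sum_congr rfl fun k hk => by rw [hc.hessian_coeff a b hk, add_mul],
    sum_add_distrib]
  congr 1
  · simp [hc.mem_freqs, ite_mul]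
  · simp_rw [mul_assoc Complex.I, ← mul_sum, sum_mul]
    rw [sum_comm, sum_congr rfl fun i _ => sum_comm]

lemma integral_norm_mollHessian_sq_le_one (hc : IsGalerkinSolution u N k₀ c) (a b : Fin d) :
    ∫ x, ‖mollHessian N c a b x‖ ^ 2 ∂torusMeasure d ≤ 1 := by
  rw [mollHessian, integral_norm_trigSum_sq]
  refine (sum_le_sum fun k _ => ?_).trans hc.energy_le_one
  rw [norm_mul, mul_pow]
  gcongr
  exact norm_mollHessian_symbol_le N k a b

end IsGalerkinSolution

lemma norm_hessian_forcing_le_one {k : Fin d → ℤ} (hk : k ≠ 0) (N : ℕ) (a b : Fin d)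
    (x : Fin d → ℝ) :
    ‖((k a * k b * mollifier N k / freqNormSq k ^ 2 : ℝ) : ℂ) * wave k x‖ ≤ 1 := by
  have hnorm := one_le_freqNormSq hk
  rw [norm_mul, norm_wave, mul_one, Complex.ofReal_div, norm_div, Complex.norm_real (_ ^ 2),
    Real.norm_of_nonneg (sq_nonneg _)]
  exact div_le_one_of_le₀ ((norm_mollHessian_symbol_le N k a b).trans
    (le_self_pow₀ hnorm two_ne_zero)) (sq_nonneg _)

end HessianFormula

section UniformBound

open scoped NNReal

lemma exists_norm_integral_biharmonicKernel_mul_le {m : Fin 2 → ℕ} (hm : ∑ i, m i = 3)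
    {g : (Fin 2 → ℝ) → ℝ} (hg : Measurable g)
    (hfin : lorentzOne 2 (torusMeasure 2) (fun x => |g x|) ≠ ⊤) {ε : ℝ} (hε : 0 < ε) :
    ∃ D : ℝ, ∀ N : ℕ, 1 ≤ N → ∀ (h : (Fin 2 → ℝ) → ℂ) (S : ℝ), Continuous h →
      (∀ y, ‖h y‖ ≤ S) → ∫ y, ‖h y‖ ^ 2 ∂torusMeasure 2 ≤ 1 →
      ∀ x : Fin 2 → ℝ, (∀ i, x i ∈ Set.Icc 0 (2 * π)) →
        ‖∫ y, biharmonicKernel m N (x - y) * (g y * h y) ∂torusMeasure 2‖ ≤ D + ε * S := by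
  obtain ⟨C, hC, hkernel⟩ := exists_chordDist_mul_norm_biharmonicKernel_le hm
  lift ε to ℝ≥0 using hε.le
  obtain ⟨D, hD⟩ := exists_lintegral_weakWeight_mul_mul_le two_pos hg.abs (fun x => abs_nonneg _)
    hfin (4 * (C + 1)).toNNReal 1 (NNReal.coe_pos.1 hε)
  refine ⟨D, fun N hN h S hh hS hsq x hx => ?_⟩
  lift S to ℝ≥0 using (norm_nonneg _).trans (hS 0)
  have hK : Continuous (biharmonicKernel m N) := continuous_trigSum _ _
  have henergy : ∫⁻ y, ENNReal.ofReal ‖h y‖ ^ (2 : ℝ) ∂torusMeasure 2 ≤ (1 : ℝ≥0) ^ (2 : ℝ) := by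
    have hint : Integrable (fun y => ‖h y‖ ^ 2) (torusMeasure 2) :=
      .of_bound (hh.norm.pow 2).aestronglyMeasurable (S ^ 2 : ℝ) (.of_forall fun y => by
        rw [norm_pow, norm_norm]
        exact pow_le_pow_left₀ (norm_nonneg _) (hS y) 2)
    rw [← ENNReal.ofReal_le_one, ofReal_integral_eq_lintegral_ofReal hint
      (.of_forall fun y => sq_nonneg _)] at hsq
    simpa [ENNReal.ofReal_pow] using hsq
  have hbound := hD (fun y => ENNReal.ofReal ‖biharmonicKernel m N (x - y)‖) (fun y => ‖h y‖) S
    (hK.norm.comp (continuous_const.sub continuous_id)).measurable.ennreal_ofReal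
    hh.norm.measurable
    (isWeakWeight_of_chordDist_mul_le hx hC hK.norm.measurable (fun z => norm_nonneg _)
      (hkernel N hN)) (fun y => norm_nonneg _) hS henergy
  refine (norm_integral_le_lintegral_norm _).trans
    (ENNReal.toReal_le_of_le_ofReal (by positivity) (le_trans (le_of_eq ?_) (hbound.trans ?_)))
  · refine lintegral_congr fun y => ?_
    rw [← ENNReal.ofReal_mul (norm_nonneg _), norm_mul, norm_mul, Complex.norm_real,
      Real.norm_eq_abs]
  · exact_mod_cast (ENNReal.ofReal_coe_nnreal (p := D + ε * S)).ge

lemma exists_period_shift_mem_Icc {d : ℕ} (x : Fin d → ℝ) :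
    ∃ m : Fin d → ℤ, ∀ i, x i + 2 * π * (m i : ℝ) ∈ Set.Icc 0 (2 * π) := by
  refine ⟨fun i => -toIcoDiv two_pi_pos 0 (x i), fun i => ?_⟩
  have hmem := Set.Ico_subset_Icc_self (sub_toIcoDiv_zsmul_mem_Ico two_pi_pos 0 (x i))
  simp only [zsmul_eq_mul, zero_add] at hmem
  convert hmem using 1
  push_cast
  ring

variable {u : (Fin 2 → ℝ) → Fin 2 → ℝ}

lemma exists_norm_mollHessian_le_add (hu : Measurable u)
    (hL : ∀ i, lorentzOne 2 (torusMeasure 2) (fun x => |u x i|) ≠ ⊤) :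
    ∃ D : ℝ, ∀ N : ℕ, 1 ≤ N → ∀ k₀ c, IsGalerkinSolution u N k₀ c →
      ∀ S : ℝ, (∀ a b x, ‖mollHessian N c a b x‖ ≤ S) →
        ∀ a b x, ‖mollHessian N c a b x‖ ≤ D + S / 2 := by
  have hint : ∀ i, Integrable (fun x => u x i) (torusMeasure 2) := fun i =>
    (memLp_two_component hu hL i).integrable one_le_two
  choose D hD using fun a b q i : Fin 2 => exists_norm_integral_biharmonicKernel_mul_le
    (sum_thirdDerivIndex a b q) ((measurable_pi_apply i).comp hu) (hL i) (ε := 1 / 8) (by norm_num)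
  refine ⟨1 + ∑ a, ∑ b, ∑ i, ∑ q, |D a b q i|, fun N hN k₀ c hc S hS a b x => ?_⟩
  obtain ⟨m, hm⟩ := exists_period_shift_mem_Icc x
  set x' := x + fun i => 2 * π * (m i : ℝ)
  have hterm (i q) : ‖∫ y, biharmonicKernel (thirdDerivIndex a b q) N (x' - y) *
      (u y i * mollHessian N c i q y) ∂torusMeasure 2‖ ≤ |D a b q i| + 1 / 8 * S :=
    (hD a b q i N hN _ S (continuous_mollHessian N c i q) (hS i q)
      (hc.integral_norm_mollHessian_sq_le_one i q) x' hm).trans (by gcongr; exact le_abs_self _)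
  calc ‖mollHessian N c a b x‖ = ‖mollHessian N c a b x'‖ := by
        rw [mollHessian, trigSum_add_period]
    _ ≤ 1 + ∑ i, ∑ q, (|D a b q i| + 1 / 8 * S) := by
        rw [hc.mollHessian_eq hint]
        refine (norm_add_le _ _).trans (add_le_add (norm_hessian_forcing_le_one
          (ne_zero_of_mem_galerkinFreqs hc.mem_freqs) N a b x') ?_)
        rw [norm_mul, Complex.norm_I, one_mul]
        exact norm_sum_le_of_le _ fun i _ => norm_sum_le_of_le _ fun q _ => hterm i q
    _ = 1 + ∑ i, ∑ q, |D a b q i| + S / 2 := by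
        simp only [sum_add_distrib, sum_const, card_univ, Fintype.card_fin, nsmul_eq_mul]
        push_cast
        ring
    _ ≤ 1 + ∑ a, ∑ b, ∑ i, ∑ q, |D a b q i| + S / 2 := by
        gcongr 1 + ?_ + S / 2
        refine (single_le_sum (f := fun b => ∑ i, ∑ q, |D a b q i|) (fun b _ => by positivity)
          (mem_univ b)).trans ?_
        exact single_le_sum (f := fun a => ∑ b, ∑ i, ∑ q, |D a b q i|) (fun a _ => by positivity)
          (mem_univ a)

theorem exists_norm_mollHessian_le (hu : Measurable u)
    (hL : ∀ i, lorentzOne 2 (torusMeasure 2) (fun x => |u x i|) ≠ ⊤) :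
    ∃ S : ℝ, ∀ N : ℕ, 1 ≤ N → ∀ k₀ c, IsGalerkinSolution u N k₀ c →
      ∀ a b x, ‖mollHessian N c a b x‖ ≤ S := by
  obtain ⟨D, hD⟩ := exists_norm_mollHessian_le_add hu hL
  refine ⟨2 * D, fun N hN k₀ c hc a b x => ?_⟩
  let f : Fin 2 × Fin 2 × (Fin 2 → ℝ) → ℝ := fun p => ‖mollHessian N c p.1 p.2.1 p.2.2‖
  have hbdd : BddAbove (Set.range f) := by
    refine ⟨∑ k ∈ galerkinFreqs 2 N, freqNormSq k * ‖c k‖, ?_⟩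
    rintro _ ⟨⟨a, b, x⟩, rfl⟩
    refine (norm_trigSum_le _ _ x).trans (sum_le_sum fun k _ => ?_)
    rw [norm_mul]
    gcongr
    exact norm_mollHessian_symbol_le N k a b
  have hsup : ⨆ p, f p ≤ D + (⨆ p, f p) / 2 :=
    ciSup_le fun p => hD N hN k₀ c hc _ (fun a b x => le_ciSup hbdd (a, b, x)) p.1 p.2.1 p.2.2
  have hle := le_ciSup hbdd (a, b, x)
  linarith

end UniformBound

/-! ### Testing the equation against the dual solutions -/

lemma tendsto_integral_mul_mul_of_tendsto_eLpNorm {α ι : Type*} [MeasurableSpace α]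
    {μ : Measure α} {l : Filter ι} {f : α → ℂ} (hf : MemLp f 2 μ) {h g : ι → α → ℂ} {S : ℝ}
    (hh : ∀ᶠ n in l, ∀ x, ‖h n x‖ ≤ S) (hg : ∀ n, AEStronglyMeasurable (g n) μ)
    (hlim : Tendsto (fun n => eLpNorm (g n) 2 μ) l (𝓝 0)) :
    Tendsto (fun n => ∫ x, f x * h n x * g n x ∂μ) l (𝓝 0) := by
  have hbound : ∀ᶠ n in l, ‖∫ x, f x * h n x * g n x ∂μ‖ₑ ≤
      ENNReal.ofReal S * (eLpNorm f 2 μ * eLpNorm (g n) 2 μ) := by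
    filter_upwards [hh] with n hn
    calc ‖∫ x, f x * h n x * g n x ∂μ‖ₑ
      _ ≤ eLpNorm (fun x => f x * h n x * g n x) 1 μ := by
        rw [eLpNorm_one_eq_lintegral_enorm]
        exact enorm_integral_le_lintegral_enorm _
      _ ≤ ENNReal.ofReal S * eLpNorm (f • g n) 1 μ := by
        refine eLpNorm_le_mul_eLpNorm_of_ae_le_mul (.of_forall fun x => ?_) 1
        rw [mul_right_comm, norm_mul, mul_comm]
        exact mul_le_mul_of_nonneg_right (hn x) (norm_nonneg _)
      _ ≤ ENNReal.ofReal S * (eLpNorm f 2 μ * eLpNorm (g n) 2 μ) := by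
        gcongr
        exact eLpNorm_smul_le_mul_eLpNorm (hg n) hf.aestronglyMeasurable
  have hzero : Tendsto (fun n => ENNReal.ofReal S * (eLpNorm f 2 μ * eLpNorm (g n) 2 μ)) l
      (𝓝 0) := by
    simpa using ENNReal.Tendsto.const_mul
      (ENNReal.Tendsto.const_mul hlim (.inr hf.eLpNorm_ne_top)) (.inr ENNReal.ofReal_ne_top)
  exact tendsto_zero_iff_enorm_tendsto_zero.2 <|
    tendsto_of_tendsto_of_tendsto_of_le_of_le' tendsto_const_nhds hzero (.of_forall fun _ =>
      zero_le) hbound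

section HeatTruncation

variable {d : ℕ}

/-- The Fourier partial sum of `f` at truncation level `N`, smoothed by the square of the
mollifier. -/
def heatTruncation (N : ℕ) (f : (Fin d → ℝ) → ℂ) : (Fin d → ℝ) → ℂ :=
  trigSum (freqBox d N) ((fun k => ((mollifier N k ^ 2 : ℝ) : ℂ)) * torusCoeff f)

lemma continuous_heatTruncation (N : ℕ) (f : (Fin d → ℝ) → ℂ) : Continuous (heatTruncation N f) :=
  continuous_trigSum _ _

lemma memLp_heatTruncation (N : ℕ) (f : (Fin d → ℝ) → ℂ) (p : ℝ≥0∞) :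
    MemLp (heatTruncation N f) p (torusMeasure d) :=
  .of_bound (continuous_heatTruncation N f).aestronglyMeasurable _
    (.of_forall fun x => norm_trigSum_le _ _ x)

lemma tendsto_eLpNorm_heatTruncation_sub {f : (Fin d → ℝ) → ℂ} (hf : MemLp f 2 (torusMeasure d)) :
    Tendsto (fun N => eLpNorm (fun x => heatTruncation N f x - f x) 2 (torusMeasure d)) atTop
      (𝓝 0) := by
  refine tendsto_eLpNorm_trigSum_sub hf eventually_mem_freqBox (fun N k => ?_) fun k => ?_
  · have hpos := mollifier_pos N k
    have hle := pow_le_one₀ hpos.le (mollifier_le_one N k) (n := 2)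
    rw [← Complex.ofReal_one, ← Complex.ofReal_sub, Complex.norm_real, Real.norm_of_nonneg] <;>
      nlinarith
  · simpa using ((tendsto_mollifier k).pow 2).ofReal

lemma neg_mem_galerkinFreqs {N : ℕ} {k : Fin d → ℤ} :
    -k ∈ galerkinFreqs d N ↔ k ∈ galerkinFreqs d N := by
  simp [galerkinFreqs, neg_mem_freqBox]

lemma integral_mul_heatTruncation {f g : (Fin d → ℝ) → ℂ} (hf : Integrable f (torusMeasure d))
    (hg : torusCoeff g 0 = 0) (N : ℕ) :
    ∫ x, f x * heatTruncation N g x ∂torusMeasure d =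
      ∑ k ∈ galerkinFreqs d N, mollifier N k ^ 2 * torusCoeff g (-k) * torusCoeff f k := by
  have hzero : ((mollifier N (0 : Fin d → ℤ) ^ 2 : ℝ) : ℂ) * torusCoeff g 0 * torusCoeff f (-0) =
      0 := by
    rw [hg, mul_zero, zero_mul]
  simp only [heatTruncation, integral_mul_trigSum hf, Pi.mul_apply]
  rw [← sum_erase (freqBox d N) hzero]
  refine sum_equiv (Equiv.neg _) (fun k => neg_mem_galerkinFreqs.symm) fun k _ => ?_
  simp [mollifier_neg]

lemma memLp_mul_mollHessian {f : (Fin d → ℝ) → ℂ} {p : ℝ≥0∞} (hf : MemLp f p (torusMeasure d))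
    (N : ℕ) (c : (Fin d → ℤ) → ℂ) (a b : Fin d) :
    MemLp (fun x => f x * mollHessian N c a b x) p (torusMeasure d) :=
  hf.of_le_mul (hf.aestronglyMeasurable.mul (continuous_mollHessian N c a b).aestronglyMeasurable)
    (.of_forall fun x => by
      rw [norm_mul, mul_comm]
      exact mul_le_mul_of_nonneg_right (norm_trigSum_le _ _ x) (norm_nonneg _))

end HeatTruncation

/-- A mean-zero steady solution of the Navier–Stokes equations in Fourier variables; the pressure
is eliminated by testing mode `k` only in directions `p` orthogonal to `k`. -/
structure IsSteadyInFourier {d : ℕ} (u : (Fin d → ℝ) → Fin d → ℝ) : Prop where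
  mean_zero : ∀ i, vecCoeff u i 0 = 0
  div_free : ∀ k : Fin d → ℤ, ∑ i, (k i : ℂ) * vecCoeff u i k = 0
  momentum : ∀ {k : Fin d → ℤ} {p : Fin d → ℝ}, ∑ i, p i * k i = 0 →
    freqNormSq k * ∑ j, (p j : ℂ) * vecCoeff u j k +
      Complex.I * ∑ i, ∑ j, (k i * p j : ℂ) * tensorCoeff u i j k = 0

section Planar

variable {u : (Fin 2 → ℝ) → (Fin 2 → ℝ)}

/-- The clockwise rotation of the plane by a right angle. -/
def rot (v : Fin 2 → ℝ) : Fin 2 → ℝ := ![v 1, -v 0]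

/-- The Fourier coefficients of the vorticity, divided by `i`. -/
def vorticityCoeff (u : (Fin 2 → ℝ) → (Fin 2 → ℝ)) (k : Fin 2 → ℤ) : ℂ :=
  k 0 * vecCoeff u 1 k - k 1 * vecCoeff u 0 k

lemma vecCoeff_rot (u : (Fin 2 → ℝ) → (Fin 2 → ℝ)) (j : Fin 2) (k : Fin 2 → ℤ) :
    vecCoeff (fun x => rot (u x)) j k = ![vecCoeff u 1 k, -vecCoeff u 0 k] j := by
  fin_cases j <;> simp [vecCoeff, rot, torusCoeff_neg]

lemma torusCoeff_mul_rot (u : (Fin 2 → ℝ) → (Fin 2 → ℝ)) (i j : Fin 2) (k : Fin 2 → ℤ) :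
    torusCoeff (fun x => ((u x i * rot (u x) j : ℝ) : ℂ)) k =
      ![tensorCoeff u i 1 k, -tensorCoeff u i 0 k] j := by
  fin_cases j <;> simp [tensorCoeff, rot, torusCoeff_neg]

lemma memLp_rot (hu : ∀ i, MemLp (fun x => u x i) 2 (torusMeasure 2)) (j : Fin 2) :
    MemLp (fun x => rot (u x) j) 2 (torusMeasure 2) := by
  fin_cases j
  exacts [hu 1, (hu 0).neg]

lemma ofReal_freqNormSq_two (k : Fin 2 → ℤ) : (freqNormSq k : ℂ) = k 0 ^ 2 + k 1 ^ 2 := by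
  simp [freqNormSq]

lemma vecCoeff_rot_eq_div {k : Fin 2 → ℤ} (hk : k ≠ 0)
    (hdiv : ∑ i, (k i : ℂ) * vecCoeff u i k = 0) (j : Fin 2) :
    vecCoeff (fun x => rot (u x)) j k = k j * vorticityCoeff u k / freqNormSq k := by
  have hne : (freqNormSq k : ℂ) ≠ 0 := Complex.ofReal_ne_zero.2 (freqNormSq_pos hk).ne'
  rw [Fin.sum_univ_two] at hdiv
  rw [eq_div_iff hne, vecCoeff_rot, vorticityCoeff, ofReal_freqNormSq_two]
  revert j
  rw [Fin.forall_fin_two]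
  refine ⟨?_, ?_⟩
  · rw [Matrix.cons_val_zero]
    linear_combination (k 1 : ℂ) * hdiv
  · rw [Matrix.cons_val_one, Matrix.cons_val_fin_one]
    linear_combination -(k 0 : ℂ) * hdiv

lemma vecCoeff_eq_zero_of_vorticityCoeff_eq_zero {k : Fin 2 → ℤ} (hk : k ≠ 0)
    (hdiv : ∑ i, (k i : ℂ) * vecCoeff u i k = 0) (hω : vorticityCoeff u k = 0) (i : Fin 2) :
    vecCoeff u i k = 0 := by
  have hrot : ∀ j, vecCoeff (fun x => rot (u x)) j k = 0 := fun j => by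
    rw [vecCoeff_rot_eq_div hk hdiv, hω, mul_zero, zero_div]
  fin_cases i
  · simpa [vecCoeff_rot] using hrot 1
  · simpa [vecCoeff_rot] using hrot 0

namespace IsSteadyInFourier

lemma sum_mul_tensorCoeff_neg (hS : IsSteadyInFourier u) (k : Fin 2 → ℤ) :
    Complex.I * ∑ i, ∑ j, (k i * k j : ℂ) *
      torusCoeff (fun x => ((u x i * rot (u x) j : ℝ) : ℂ)) (-k) =
        -(freqNormSq k * vorticityCoeff u (-k)) := by
  have hmode := hS.momentum (k := -k) (p := ![-k 1, k 0]) (by simp [mul_comm])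
  simp only [torusCoeff_mul_rot, vorticityCoeff, freqNormSq_neg, Fin.sum_univ_two, Pi.neg_apply,
    Matrix.cons_val_zero, Matrix.cons_val_one, Matrix.cons_val_fin_one, Int.cast_neg,
    Complex.ofReal_neg, Complex.ofReal_intCast] at hmode ⊢
  linear_combination -hmode

lemma torusCoeff_rot_zero (hS : IsSteadyInFourier u) (j : Fin 2) :
    torusCoeff (fun x => (rot (u x) j : ℂ)) 0 = 0 := by
  refine (vecCoeff_rot u j 0).trans ?_
  fin_cases j <;> simp [hS.mean_zero]

lemma torusCoeff_rot_neg (hS : IsSteadyInFourier u) {k : Fin 2 → ℤ} (hk : k ≠ 0) (j : Fin 2) :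
    torusCoeff (fun x => (rot (u x) j : ℂ)) (-k) =
      -(vorticityCoeff u (-k) / freqNormSq k) * k j := by
  refine (vecCoeff_rot_eq_div (neg_ne_zero.2 hk) (hS.div_free (-k)) j).trans ?_
  rw [freqNormSq_neg, Pi.neg_apply]
  push_cast
  ring

lemma sum_integral_mul_mollHessian_mul_rot (hS : IsSteadyInFourier u)
    (hu : ∀ i, MemLp (fun x => u x i) 2 (torusMeasure 2)) (N : ℕ) (c : (Fin 2 → ℤ) → ℂ) :
    Complex.I * ∑ i, ∑ j, ∫ x, (u x i : ℂ) * mollHessian N c i j x * rot (u x) j ∂torusMeasure 2 =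
      -∑ k ∈ galerkinFreqs 2 N, mollifier N k * freqNormSq k * vorticityCoeff u (-k) * c k := by
  have hint : ∀ i j, Integrable (fun x => ((u x i * rot (u x) j : ℝ) : ℂ)) (torusMeasure 2) :=
    fun i j => ((hu i).integrable_mul (memLp_rot hu j)).ofReal
  have hterm : ∀ i j, ∫ x, (u x i : ℂ) * mollHessian N c i j x * rot (u x) j ∂torusMeasure 2 =
      ∑ k ∈ galerkinFreqs 2 N, (mollifier N k * c k) * ((k i * k j : ℂ) *
        torusCoeff (fun x => ((u x i * rot (u x) j : ℝ) : ℂ)) (-k)) := fun i j => by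
    have hpair := integral_mul_trigSum (hint i j) (galerkinFreqs 2 N)
      fun l => ((l i * l j * mollifier N l : ℝ) : ℂ) * c l
    simp only [mul_right_comm _ (mollHessian N c i j _), ← Complex.ofReal_mul]
    refine hpair.trans (sum_congr rfl fun k _ => ?_)
    push_cast
    ring
  simp only [hterm]
  rw [sum_congr rfl fun i _ => sum_comm, sum_comm]
  simp only [← mul_sum]
  rw [mul_sum, ← sum_neg_distrib]
  refine sum_congr rfl fun k _ => ?_
  linear_combination (mollifier N k * c k : ℂ) * hS.sum_mul_tensorCoeff_neg k

lemma sum_integral_mul_mollHessian_mul_heatTruncation (hS : IsSteadyInFourier u)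
    (hu : ∀ i, MemLp (fun x => u x i) 2 (torusMeasure 2)) {N : ℕ} {k₀ : Fin 2 → ℤ}
    {c : (Fin 2 → ℤ) → ℂ} (hc : IsGalerkinSolution u N k₀ c) :
    Complex.I * ∑ i, ∑ j, ∫ x, (u x i : ℂ) * mollHessian N c i j x *
        heatTruncation N (fun x => (rot (u x) j : ℂ)) x ∂torusMeasure 2 =
      mollifier N k₀ * vorticityCoeff u (-k₀) / freqNormSq k₀ -
        ∑ k ∈ galerkinFreqs 2 N, mollifier N k * freqNormSq k * vorticityCoeff u (-k) * c k := by
  have hint : ∀ i j, Integrable (fun x => (u x i : ℂ) * mollHessian N c i j x) (torusMeasure 2) :=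
    fun i j => (memLp_mul_mollHessian (hu i).ofReal N c i j).integrable one_le_two
  have hsource : (mollifier N k₀ * vorticityCoeff u (-k₀) / freqNormSq k₀ : ℂ) =
      ∑ k ∈ galerkinFreqs 2 N, mollifier N k * vorticityCoeff u (-k) / freqNormSq k *
        (if k = k₀ then 1 else 0) := by
    simp [hc.mem_freqs]
  simp only [integral_mul_heatTruncation (hint _ _) (hS.torusCoeff_rot_zero _)]
  rw [hsource, ← sum_sub_distrib, sum_congr rfl fun i _ => sum_comm, sum_comm, mul_sum]
  refine sum_congr rfl fun k hk => ?_
  have hk₀ := ne_zero_of_mem_galerkinFreqs hk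
  have hne : (freqNormSq k : ℂ) ≠ 0 := Complex.ofReal_ne_zero.2 (freqNormSq_pos hk₀).ne'
  have hrow : ∑ i, ∑ j, (mollifier N k ^ 2 : ℂ) *
      torusCoeff (fun x => (rot (u x) j : ℂ)) (-k) *
        torusCoeff (fun x => (u x i : ℂ) * mollHessian N c i j x) k =
      -(mollifier N k ^ 2 * vorticityCoeff u (-k) / freqNormSq k) *
        ∑ i, ∑ j, k j * torusCoeff (fun x => (u x i : ℂ) * mollHessian N c i j x) k := by
    simp only [hS.torusCoeff_rot_neg hk₀, mul_sum]
    exact sum_congr rfl fun i _ => sum_congr rfl fun j _ => by ring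
  rw [hrow, ← hc.equation k hk]
  field_simp
  ring

lemma sum_integral_mul_mollHessian_mul_sub (hS : IsSteadyInFourier u)
    (hu : ∀ i, MemLp (fun x => u x i) 2 (torusMeasure 2)) {N : ℕ} {k₀ : Fin 2 → ℤ}
    {c : (Fin 2 → ℤ) → ℂ} (hc : IsGalerkinSolution u N k₀ c) :
    Complex.I * ∑ i, ∑ j, ∫ x, (u x i : ℂ) * mollHessian N c i j x *
        (heatTruncation N (fun x => (rot (u x) j : ℂ)) x - rot (u x) j) ∂torusMeasure 2 =
      mollifier N k₀ * vorticityCoeff u (-k₀) / freqNormSq k₀ := by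
  have hsub : ∀ i j, ∫ x, (u x i : ℂ) * mollHessian N c i j x *
      (heatTruncation N (fun x => (rot (u x) j : ℂ)) x - rot (u x) j) ∂torusMeasure 2 =
      (∫ x, (u x i : ℂ) * mollHessian N c i j x *
        heatTruncation N (fun x => (rot (u x) j : ℂ)) x ∂torusMeasure 2) -
      ∫ x, (u x i : ℂ) * mollHessian N c i j x * rot (u x) j ∂torusMeasure 2 := fun i j => by
    have hH := memLp_mul_mollHessian (hu i).ofReal N c i j
    simp only [mul_sub]
    exact integral_sub (hH.integrable_mul (memLp_heatTruncation _ _ 2))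
      (hH.integrable_mul (memLp_rot hu j).ofReal)
  simp only [hsub, sum_sub_distrib]
  rw [mul_sub, hS.sum_integral_mul_mollHessian_mul_heatTruncation hu hc,
    hS.sum_integral_mul_mollHessian_mul_rot hu]
  ring

end IsSteadyInFourier

theorem vorticityCoeff_eq_zero (hS : IsSteadyInFourier u) (hu : Measurable u)
    (hL : ∀ i, lorentzOne 2 (torusMeasure 2) (fun x => |u x i|) ≠ ⊤) {k : Fin 2 → ℤ} (hk : k ≠ 0) :
    vorticityCoeff u k = 0 := by
  have hu2 := memLp_two_component hu hL
  have hint : ∀ i, Integrable (fun x => u x i) (torusMeasure 2) := fun i =>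
    (hu2 i).integrable one_le_two
  have hsolve : ∀ᶠ N in atTop, ∃ c, IsGalerkinSolution u N (-k) c := by
    filter_upwards [eventually_mem_freqBox (-k)] with N hN
    exact exists_isGalerkinSolution hint hS.div_free (mem_erase.2 ⟨neg_ne_zero.2 hk, hN⟩)
  obtain ⟨c, hc⟩ := hsolve.choice
  obtain ⟨S, hbound⟩ := exists_norm_mollHessian_le hu hL
  have hlim : ∀ i j, Tendsto (fun N => ∫ x, (u x i : ℂ) * mollHessian N (c N) i j x *
      (heatTruncation N (fun x => (rot (u x) j : ℂ)) x - rot (u x) j) ∂torusMeasure 2) atTop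
        (𝓝 0) := fun i j => by
    refine tendsto_integral_mul_mul_of_tendsto_eLpNorm (hu2 i).ofReal (S := S) ?_ (fun N => ?_)
      (tendsto_eLpNorm_heatTruncation_sub (memLp_rot hu2 j).ofReal)
    · filter_upwards [hc, eventually_ge_atTop 1] with N hcN hN
      exact hbound N hN (-k) (c N) hcN i j
    · exact (continuous_heatTruncation _ _).aestronglyMeasurable.sub
        (memLp_rot hu2 j).ofReal.aestronglyMeasurable
  have hzero : Tendsto (fun N => (mollifier N (-k) * vorticityCoeff u k / freqNormSq (-k) : ℂ))
      atTop (𝓝 0) := by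
    have hsum := (tendsto_finsetSum univ fun i _ => tendsto_finsetSum univ fun j _ =>
      hlim i j).const_mul Complex.I
    simp only [sum_const_zero, mul_zero] at hsum
    refine hsum.congr' ?_
    filter_upwards [hc] with N hcN
    rw [hS.sum_integral_mul_mollHessian_mul_sub hu2 hcN, neg_neg]
  have hone : Tendsto (fun N => (mollifier N (-k) * vorticityCoeff u k / freqNormSq (-k) : ℂ))
      atTop (𝓝 (1 * vorticityCoeff u k / freqNormSq (-k))) :=
    ((tendsto_mollifier (-k)).ofReal.mul_const _).div_const _
  have hquot := tendsto_nhds_unique hone hzero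
  rw [freqNormSq_neg, one_mul, div_eq_zero_iff] at hquot
  exact hquot.resolve_right (Complex.ofReal_ne_zero.2 (freqNormSq_pos hk).ne')

theorem ae_eq_zero_of_isSteadyInFourier (hS : IsSteadyInFourier u) (hu : Measurable u)
    (hL : ∀ i, lorentzOne 2 (torusMeasure 2) (fun x => |u x i|) ≠ ⊤) : u =ᵐ[torusMeasure 2] 0 := by
  have hu2 := memLp_two_component hu hL
  have hcoeff : ∀ i k, vecCoeff u i k = 0 := fun i k => by
    rcases eq_or_ne k 0 with rfl | hk
    · exact hS.mean_zero i
    · exact vecCoeff_eq_zero_of_vorticityCoeff_eq_zero hk (hS.div_free k)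
        (vorticityCoeff_eq_zero hS hu hL hk) i
  have hcomp : ∀ i, (fun x => (u x i : ℂ)) =ᵐ[torusMeasure 2] 0 := fun i =>
    ae_eq_zero_of_torusCoeff_eq_zero (hu2 i).ofReal (hcoeff i)
  filter_upwards [ae_all_iff.2 hcomp] with x hx
  exact funext fun i => Complex.ofReal_eq_zero.1 (hx i)

end Planar

theorem steady_L21_trivial
    (u : (Fin 2 → ℝ) → (Fin 2 → ℝ)) (hu_meas : Measurable u) (hu_per : PerF 2 u)
    (hu_L21 : L21 u < ⊤)
    (hu_mean : ∫ x in T2, u x = 0)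
    (hu_div : ∀ ψ : (Fin 2 → ℝ) → ℝ, ContDiff ℝ (⊤ : ℕ∞) ψ → PerF 2 ψ →
      ∫ x in T2, (∑ i, u x i * pd 2 i ψ x) = 0)
    (hu_NS : ∀ φ : (Fin 2 → ℝ) → (Fin 2 → ℝ), ContDiff ℝ (⊤ : ℕ∞) φ → PerF 2 φ →
      (∀ x, divg 2 φ x = 0) →
      (∫ x in T2, (∑ j, u x j * lap 2 (fun y => φ y j) x))
        + ∑ i, ∑ j, ∫ x in T2, u x i * u x j * pd 2 i (fun y => φ y j) x = 0) :
    ∀ᵐ x ∂(volume.restrict T2), u x = 0 := by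
  have hL := lorentzOne_abs_ne_top_of_L21 hu_meas hu_L21
  have hu2 := memLp_two_component hu_meas hL
  have hint : ∀ i, Integrable (fun x => u x i) (torusMeasure 2) := fun i =>
    (hu2 i).integrable one_le_two
  have hweak : IsWeakSteady u := fun φ hφ hper hdiv => by
    have htest := hu_NS φ hφ hper hdiv
    simp only [setIntegral_T2, smul_eq_mul, ← mul_sum, ← mul_add] at htest
    exact (mul_eq_zero.1 htest).resolve_left (by positivity)
  have hsteady : IsSteadyInFourier u :=
    { mean_zero := vecCoeff_zero_eq_zero hint (integral_torusMeasure_eq_zero hu_mean)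
      div_free := sum_mul_vecCoeff_eq_zero hint fun ψ hψ hper =>
        integral_torusMeasure_eq_zero (hu_div ψ hψ hper)
      momentum := hweak.freqNormSq_mul_sum_vecCoeff_add hint fun i j =>
        (hu2 i).integrable_mul (hu2 j) }
  exact ae_restrict_T2_iff.2 (ae_eq_zero_of_isSteadyInFourier hsteady hu_meas hL)
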